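/- arXiv:2604.27424 — 3 statements merged into one kernel-verified Lean document; each statement's English description precedes it below -/
import Mathlib

section
/- Let k ≥ 2 be even and let T be a tree on n vertices of diameter exactly k + 3. Then mdi_k(T) > f_k(n). -/
/-- `J` is a distance-`k` independent set in `G`: any two distinct vertices of `J`
are at graph distance at least `k + 1`. -/
def DkIndep {V : Type*} (G : SimpleGraph V) (k : ℕ) (J : Set V) : Prop :=
  ∀ ⦃u⦄, u ∈ J → ∀ ⦃v⦄, v ∈ J → u ≠ v → k + 1 ≤ G.dist u v

/-- `J` is a maximal distance-`k` independent set (`k`-MDIS) of `G`. -/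
def MaxDkIndep {V : Type*} (G : SimpleGraph V) (k : ℕ) (J : Set V) : Prop :=
  DkIndep G k J ∧ ∀ J', DkIndep G k J' → J ⊆ J' → J' = J

/-- `mdi G k` is the number of maximal distance-`k` independent sets of `G`. -/
noncomputable def mdi {V : Type*} (G : SimpleGraph V) (k : ℕ) : ℕ :=
  {J : Set V | MaxDkIndep G k J}.ncard

/-- `f_k(n)` from the paper. -/
def fk (k n : ℕ) : ℕ :=
  if n ≤ k + 1 then n else n - (n - k % 2) / (k / 2 + 1) + 1

/-- closed ball `N_k[x]`. -/
def ball {V : Type*} (G : SimpleGraph V) (k : ℕ) (x : V) : Set V :=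
  {v | G.dist x v ≤ k}

/-- a leaf is a vertex of degree 1. -/
def IsLeaf {V : Type*} (G : SimpleGraph V) (v : V) : Prop :=
  (G.neighborSet v).ncard = 1

/-- eccentricity of a vertex. -/
noncomputable def ecc {V : Type*} [Fintype V] (G : SimpleGraph V) (v : V) : ℕ :=
  Finset.univ.sup (G.dist v)

/-- diameter of a finite graph. -/
noncomputable def gdiam {V : Type*} [Fintype V] (G : SimpleGraph V) : ℕ :=
  Finset.univ.sup (ecc G)

/-- a central vertex is one of minimum eccentricity. -/
def IsCentral {V : Type*} [Fintype V] (G : SimpleGraph V) (v : V) : Prop :=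
  ∀ u, ecc G v ≤ ecc G u

/-- a `k`-twin: some other vertex has the same closed `k`-ball. -/
def KTwin {V : Type*} (G : SimpleGraph V) (k : ℕ) (u : V) : Prop :=
  ∃ v, v ≠ u ∧ ball G k u = ball G k v

/-- a diametral leaf: a leaf whose eccentricity equals the diameter. -/
def IsDiametralLeaf {V : Type*} [Fintype V] (G : SimpleGraph V) (u : V) : Prop :=
  IsLeaf G u ∧ ecc G u = gdiam G

/-- a `k`-special pair. -/
def KSpecial {V : Type*} [Fintype V] (G : SimpleGraph V) (k : ℕ) (x y : V) : Prop :=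
  IsDiametralLeaf G x ∧ IsDiametralLeaf G y ∧ KTwin G k x ∧ KTwin G k y ∧
    ball G k x ≠ ball G k y

/-- `mdi*_k(G, ℓ)`. -/
noncomputable def mdiStar {V : Type*} (G : SimpleGraph V) (k : ℕ) (ℓ : V) : ℕ :=
  {J : Set V | MaxDkIndep G k J ∧ ℓ ∈ J ∧ ∃ w ∉ J, ball G k w ∩ J = {ℓ}}.ncard

/-- The spider tree `S_{p,m}`: a center (`none`) together with `p` legs of `m` vertices. -/
def spider (p m : ℕ) : SimpleGraph (Option (Fin p × Fin m)) :=
  SimpleGraph.fromRel fun a b =>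
    match a, b with
    | none, some (_, j) => (j : ℕ) = 0
    | some (i, j), some (i', j') => i = i' ∧ (j : ℕ) + 1 = (j' : ℕ)
    | _, _ => False

/-- `S'_{p,m}`: the spider `S_{p,m}` with one leaf at distance `m` from the center removed. -/
def spider' (p m : ℕ) (hp : 0 < p) (hm : 0 < m) :=
  (spider p m).induce
    {v | v ≠ some (⟨0, hp⟩, ⟨m - 1, Nat.sub_lt hm Nat.one_pos⟩)}

/-- The double spider `B_{p₁,p₂,s}`: two adjacent centers (`Sum.inl false`, `Sum.inl true`),
with `p₁` legs of `s` vertices on the first and `p₂` legs of `s` vertices on the second. -/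
def btree (p₁ p₂ s : ℕ) : SimpleGraph (Bool ⊕ ((Fin p₁ ⊕ Fin p₂) × Fin s)) :=
  SimpleGraph.fromRel fun a b =>
    match a, b with
    | Sum.inl x, Sum.inl y => x ≠ y
    | Sum.inl false, Sum.inr (Sum.inl _, j) => (j : ℕ) = 0
    | Sum.inl true, Sum.inr (Sum.inr _, j) => (j : ℕ) = 0
    | Sum.inr (c, j), Sum.inr (c', j') => c = c' ∧ (j : ℕ) + 1 = (j' : ℕ)
    | _, _ => False

/-- `G` contains a subgraph isomorphic to `H`. -/
def ContainsSub {V W : Type*} (G : SimpleGraph V) (H : SimpleGraph W) : Prop :=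
  ∃ f : W → V, Function.Injective f ∧ ∀ a b, H.Adj a b → G.Adj (f a) (f b)

/-- A pendant path on `s` vertices `P 0, …, P (s-1)` attached to `w`:
`P 0` is a leaf, consecutive vertices are adjacent, interior vertices have degree 2,
and `P (s-1)` is adjacent to `w`. -/
def IsPendantPath {V : Type*} (T : SimpleGraph V) (s : ℕ) (P : ℕ → V) (w : V) : Prop :=
  Set.InjOn P (Set.Iio s) ∧ (∀ i < s, P i ≠ w) ∧ IsLeaf T (P 0) ∧
    (∀ i, i + 1 < s → T.Adj (P i) (P (i + 1))) ∧
    (∀ i, 0 < i → i < s → (T.neighborSet (P i)).ncard = 2) ∧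
    T.Adj (P (s - 1)) w

/-- Isomorphism of simple graphs on `Fin n` as a setoid. -/
def graphSetoid (n : ℕ) : Setoid (SimpleGraph (Fin n)) where
  r G H := Nonempty (G ≃g H)
  iseqv := ⟨fun _ => ⟨SimpleGraph.Iso.refl⟩, fun ⟨e⟩ => ⟨e.symm⟩, fun ⟨e⟩ ⟨f⟩ => ⟨e.trans f⟩⟩

/-- The number of isomorphism classes of graphs in a set of graphs on `Fin n`. -/
noncomputable def numIsoClasses {n : ℕ} (S : Set (SimpleGraph (Fin n))) : ℕ :=
  ((fun G => Quotient.mk (graphSetoid n) G) '' S).ncard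

/-!
Write `k = 2r`, so that `T` has diameter `2r + 3` and hence a central edge whose removal leaves two
sides, both of depth exactly `r + 1`. Choose a `k`-MDIS `X` greedily, starting with the vertices of
depth `r + 1`. An independent set `S` disjoint from `X` extends to a `k`-MDIS `J` whose trace on `X`
is `X` minus the vertices in conflict with `S`. Hence sets `S` with different conflicts, or with a
dependent union, give different `J`. The empty set, the singletons `{v}` with `v ∉ X` and one pair
of depth-`r` vertices on different sides are pairwise distinguished in this way, so there are at
least `n - |X| + 2` many `k`-MDISs, while a packing argument gives `|X| ≤ n / (r + 1)`.
-/

section DistanceIndependent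

variable {V : Type*} {G : SimpleGraph V} {k : ℕ} {J S X : Set V} {u v : V}

theorem dkIndep_iff_pairwise : DkIndep G k J ↔ J.Pairwise fun u v ↦ k < G.dist u v :=
  Iff.rfl

theorem DkIndep.mono (hJ : DkIndep G k J) (hSJ : S ⊆ J) : DkIndep G k S :=
  dkIndep_iff_pairwise.2 ((dkIndep_iff_pairwise.1 hJ).mono hSJ)

theorem DkIndep.eq_of_dist_le (hJ : DkIndep G k J) (hu : u ∈ J) (hv : v ∈ J)
    (huv : G.dist u v ≤ k) : u = v :=
  (dkIndep_iff_pairwise.1 hJ).eq hu hv huv.not_gt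

theorem DkIndep.empty : DkIndep G k ∅ :=
  dkIndep_iff_pairwise.2 (Set.pairwise_empty _)

theorem DkIndep.singleton : DkIndep G k {v} :=
  dkIndep_iff_pairwise.2 (Set.pairwise_singleton v _)

theorem DkIndep.union (hJ : DkIndep G k J) (hS : DkIndep G k S)
    (h : ∀ u ∈ J, ∀ v ∈ S, k < G.dist u v) : DkIndep G k (J ∪ S) :=
  dkIndep_iff_pairwise.2 <| Set.pairwise_union.2
    ⟨dkIndep_iff_pairwise.1 hJ, dkIndep_iff_pairwise.1 hS, fun u hu v hv _ ↦
      ⟨h u hu v hv, G.dist_comm (u := v) ▸ h u hu v hv⟩⟩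

theorem DkIndep.pair (huv : k < G.dist u v) : DkIndep G k {u, v} :=
  DkIndep.singleton.union DkIndep.singleton (by simpa using huv)

theorem maxDkIndep_iff_maximal : MaxDkIndep G k J ↔ Maximal (DkIndep G k) J :=
  ⟨fun h ↦ ⟨h.1, fun J' hJ' hle ↦ (h.2 J' hJ' hle).le⟩,
    fun h ↦ ⟨h.1, fun _ hJ' hle ↦ h.eq_of_ge hJ' hle⟩⟩

theorem exists_dist_le_of_maximal_subset {L : Set V}
    (hJ : Maximal (fun J ↦ DkIndep G k J ∧ J ⊆ L) J) (hv : v ∈ L) : ∃ x ∈ J, G.dist x v ≤ k := by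
  by_contra! hfar
  have hins : DkIndep G k (J ∪ {v}) := hJ.1.1.union DkIndep.singleton (by simpa using hfar)
  have hvJ : v ∈ J :=
    hJ.2 ⟨hins, Set.union_subset hJ.1.2 (Set.singleton_subset_iff.2 hv)⟩ Set.subset_union_left
      (by simp)
  simpa using hfar v hvJ

theorem MaxDkIndep.exists_dist_le (hJ : MaxDkIndep G k J) (v : V) : ∃ x ∈ J, G.dist x v ≤ k :=
  exists_dist_le_of_maximal_subset (L := Set.univ) (by simpa using maxDkIndep_iff_maximal.1 hJ)
    (Set.mem_univ v)

theorem DkIndep.exists_maxDkIndep_superset [Finite V] (hS : DkIndep G k S) :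
    ∃ J, S ⊆ J ∧ MaxDkIndep G k J :=
  have ⟨J, hSJ, hJ⟩ := (Set.toFinite {J | DkIndep G k J}).exists_le_maximal hS
  ⟨J, hSJ, maxDkIndep_iff_maximal.2 hJ⟩

theorem exists_maxDkIndep_forall_exists_dist_le [Finite V] (G : SimpleGraph V) (k : ℕ)
    (L : Set V) :
    ∃ X, MaxDkIndep G k X ∧ ∀ v ∈ L, ∃ x ∈ X, x ∈ L ∧ G.dist x v ≤ k := by
  obtain ⟨J, -, hJ⟩ := (Set.toFinite {J | DkIndep G k J ∧ J ⊆ L}).exists_le_maximal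
    (a := ∅) ⟨DkIndep.empty, Set.empty_subset L⟩
  obtain ⟨X, hJX, hX⟩ := hJ.1.1.exists_maxDkIndep_superset
  refine ⟨X, hX, fun v hv ↦ ?_⟩
  obtain ⟨x, hx, hxv⟩ := exists_dist_le_of_maximal_subset hJ hv
  exact ⟨x, hJX hx, hJ.1.2 hx, hxv⟩

end DistanceIndependent

section Counting

variable {V : Type*} {G : SimpleGraph V} {k : ℕ} {S X : Set V} {a b v : V}

/-- The vertices of `X` within distance `k` of `S`: when `S` is disjoint from `X`, these are the
members of `X` that a distance-`k` independent set containing `S` has to give up. -/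
def conflicts (G : SimpleGraph V) (k : ℕ) (X S : Set V) : Set V :=
  {x ∈ X | ∃ u ∈ S, G.dist x u ≤ k}

theorem conflicts_subset : conflicts G k X S ⊆ X :=
  Set.sep_subset ..

theorem mem_conflicts_singleton {x : V} :
    x ∈ conflicts G k X {v} ↔ x ∈ X ∧ G.dist x v ≤ k := by
  simp [conflicts]

theorem conflicts_empty : conflicts G k X ∅ = ∅ := by
  simp [conflicts]

theorem conflicts_mono {S' : Set V} (h : S ⊆ S') : conflicts G k X S ⊆ conflicts G k X S' :=
  fun _ ⟨hx, u, hu, hxu⟩ ↦ ⟨hx, u, h hu, hxu⟩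

theorem MaxDkIndep.conflicts_nonempty (hX : MaxDkIndep G k X) (hS : S.Nonempty) :
    (conflicts G k X S).Nonempty :=
  have ⟨v, hv⟩ := hS
  have ⟨x, hx, hxv⟩ := hX.exists_dist_le v
  ⟨x, hx, v, hv, hxv⟩

theorem DkIndep.exists_maxDkIndep_inter_eq [Finite V] (hX : DkIndep G k X) (hS : DkIndep G k S)
    (hdisj : Disjoint S X) :
    ∃ J, MaxDkIndep G k J ∧ S ⊆ J ∧ J ∩ X = X \ conflicts G k X S := by
  have hfar : ∀ x ∈ X \ conflicts G k X S, ∀ u ∈ S, k < G.dist x u := fun x hx u hu ↦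
    not_le.1 fun hxu ↦ hx.2 ⟨hx.1, u, hu, hxu⟩
  obtain ⟨J, hsub, hJ⟩ :=
    ((hX.mono Set.sdiff_subset).union hS hfar).exists_maxDkIndep_superset
  have hSJ : S ⊆ J := Set.subset_union_right.trans hsub
  refine ⟨J, hJ, hSJ, Set.Subset.antisymm ?_ ?_⟩
  · rintro x ⟨hxJ, hxX⟩
    refine ⟨hxX, fun ⟨_, u, hu, hxu⟩ ↦ hdisj.ne_of_mem hu hxX ?_⟩
    exact (hJ.1.eq_of_dist_le hxJ (hSJ hu) hxu).symm
  · exact fun x hx ↦ ⟨hsub (Or.inl hx), hx.1⟩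

theorem DkIndep.ncard_le_mdi [Finite V] (hX : DkIndep G k X) {𝒮 : Set (Set V)}
    (hindep : ∀ S ∈ 𝒮, DkIndep G k S) (hdisj : ∀ S ∈ 𝒮, Disjoint S X)
    (hsep : 𝒮.Pairwise fun S S' ↦ DkIndep G k (S ∪ S') → conflicts G k X S ≠ conflicts G k X S') :
    𝒮.ncard ≤ mdi G k := by
  choose! J hJ hSJ hJX using fun S hS ↦ hX.exists_maxDkIndep_inter_eq (hindep S hS) (hdisj S hS)
  refine Set.ncard_le_ncard_of_injOn J hJ (fun S hS S' hS' hEq ↦ ?_)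
  have hunion : DkIndep G k (S ∪ S') :=
    (hJ S hS).1.mono (Set.union_subset (hSJ S hS) (hEq ▸ hSJ S' hS'))
  have hdiff : X \ conflicts G k X S = X \ conflicts G k X S' := by
    rw [← hJX S hS, ← hJX S' hS', hEq]
  by_contra hne
  exact hsep hS hS' hne hunion
    ((sdiff_right_inj conflicts_subset conflicts_subset).1 hdiff)

theorem MaxDkIndep.card_add_two_le_mdi_add_ncard [Finite V] (hX : MaxDkIndep G k X)
    (hsep : ∀ v ∉ X, ∀ w ∉ X, k < G.dist v w → conflicts G k X {v} ≠ conflicts G k X {w})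
    (ha : a ∉ X) (hb : b ∉ X) (hab : k < G.dist a b)
    (hpair : ∀ v, DkIndep G k ({a, b} ∪ {v}) → conflicts G k X {a, b} ≠ conflicts G k X {v}) :
    Nat.card V + 2 ≤ mdi G k + X.ncard := by
  let 𝒮 : Set (Set V) := (fun v ↦ {v}) '' Xᶜ
  let Separated (S S' : Set V) : Prop :=
    DkIndep G k (S ∪ S') → conflicts G k X S ≠ conflicts G k X S'
  have : Std.Symm Separated := ⟨fun S S' h hunion ↦ (h (Set.union_comm S S' ▸ hunion)).symm⟩
  have hne : a ≠ b := fun h ↦ by simp [h] at hab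
  have hpair_mem : {a, b} ∉ 𝒮 := by
    rintro ⟨v, -, hv⟩
    exact hne (Set.subsingleton_singleton.anti hv.ge (by simp) (by simp))
  have hempty_mem : ∅ ∉ insert {a, b} 𝒮 := by
    rintro (h | ⟨v, -, hv⟩)
    · exact (Set.insert_nonempty a {b}).ne_empty h.symm
    · exact Set.singleton_ne_empty v hv
  have hsingletons : 𝒮.Pairwise Separated := by
    rintro _ ⟨v, hv, rfl⟩ _ ⟨w, hw, rfl⟩ hvw hunion
    exact hsep v hv w hw (hunion (by simp) (by simp) fun h ↦ hvw (h ▸ rfl))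
  have hempty (S : Set V) (hS : S.Nonempty) : Separated ∅ S := fun _ ↦
    conflicts_empty.trans_ne (hX.conflicts_nonempty hS).ne_empty.symm
  have hle : (insert ∅ (insert {a, b} 𝒮)).ncard ≤ mdi G k := by
    refine hX.1.ncard_le_mdi ?_ ?_ ((hsingletons.insert_of_symm ?_).insert_of_symm ?_)
    · rintro _ (rfl | rfl | ⟨v, -, rfl⟩)
      exacts [DkIndep.empty, DkIndep.pair hab, DkIndep.singleton]
    · rintro _ (rfl | rfl | ⟨v, hv, rfl⟩)
      exacts [Set.empty_disjoint X, by simp [ha, hb], Set.disjoint_singleton_left.2 hv]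
    · rintro _ ⟨v, -, rfl⟩ -
      exact hpair v
    · rintro _ (rfl | ⟨v, -, rfl⟩) -
      exacts [hempty _ (Set.insert_nonempty a {b}), hempty _ (Set.singleton_nonempty v)]
  rw [Set.ncard_insert_of_notMem hempty_mem, Set.ncard_insert_of_notMem hpair_mem,
    Set.ncard_image_of_injective _ Set.singleton_injective] at hle
  have := Set.ncard_add_ncard_compl X
  omega

end Counting

section Geodesics

variable {V : Type*} {G : SimpleGraph V} {u v z : V}

theorem dist_add_dist_of_mem_support (hG : G.Connected) {p : G.Walk u v}
    (hp : p.length = G.dist u v) (hz : z ∈ p.support) :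
    G.dist u z + G.dist z v = G.dist u v := by
  obtain ⟨q, r, rfl⟩ := SimpleGraph.Walk.mem_support_iff_exists_append.1 hz
  rw [SimpleGraph.Walk.length_append] at hp
  have := SimpleGraph.dist_le q
  have := SimpleGraph.dist_le r
  have := hG.dist_triangle (u := u) (v := z) (w := v)
  omega

theorem exists_dist_eq_of_le (hG : G.Connected) {j : ℕ} (hj : j ≤ G.dist u v) :
    ∃ z, G.dist u z = j ∧ G.dist z v = G.dist u v - j := by
  obtain ⟨p, hp⟩ := hG.exists_walk_length_eq_dist u v
  refine ⟨p.getVert j, ?_⟩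
  have htake := SimpleGraph.dist_le (p.take j)
  have hdrop := SimpleGraph.dist_le (p.drop j)
  have htri := hG.dist_triangle (u := u) (v := p.getVert j) (w := v)
  rw [SimpleGraph.Walk.take_length] at htake
  rw [SimpleGraph.Walk.drop_length] at hdrop
  omega

theorem DkIndep.ncard_mul_le_card [Finite V] (hG : G.Connected) {r : ℕ} {X : Set V}
    (hX : DkIndep G (2 * r) X) (hfar : ∀ x ∈ X, ∃ y, r ≤ G.dist x y) :
    X.ncard * (r + 1) ≤ Nat.card V := by
  have hsphere (x : X) (i : Fin (r + 1)) : ∃ z, G.dist x z = i :=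
    have ⟨y, hy⟩ := hfar x x.2
    have ⟨z, hz, _⟩ := exists_dist_eq_of_le hG ((Nat.lt_succ_iff.1 i.2).trans hy)
    ⟨z, hz⟩
  choose f hf using hsphere
  have hinj : Function.Injective fun p : X × Fin (r + 1) ↦ f p.1 p.2 := by
    rintro ⟨x, i⟩ ⟨y, j⟩ (h : f x i = f y j)
    have hxi := hf x i
    have hyj := hf y j
    have hxy : x = y := by
      refine Subtype.ext (hX.eq_of_dist_le x.2 y.2 ?_)
      have := hG.dist_triangle (u := (x : V)) (v := f x i) (w := y)
      rw [h] at this hxi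
      rw [G.dist_comm] at hyj
      omega
    subst hxy
    have hij : i = j := Fin.ext (by rw [← hxi, ← hyj, h])
    rw [hij]
  simpa [Nat.card_prod, Set.ncard] using Nat.card_le_card_of_injective _ hinj

end Geodesics

section TreeMetric

variable {V : Type*} {T : SimpleGraph V} {u u' v w z : V}

theorem path_length_eq_dist (hT : T.IsTree) {p : T.Walk u v} (hp : p.IsPath) :
    p.length = T.dist u v := by
  obtain ⟨q, hq, hlen⟩ := hT.connected.exists_path_of_dist u v
  rw [(hT.existsUnique_path u v).unique hp hq, hlen]

theorem dist_eq_of_adj_of_dist_eq_add_one (hT : T.IsTree) (huu' : T.Adj u u')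
    (hw : T.dist w u' = T.dist w u + 1) (hv : T.dist v u = T.dist v u' + 1) :
    T.dist w v = T.dist w u + T.dist v u' + 1 := by
  obtain ⟨p, hp, hplen⟩ := hT.connected.exists_path_of_dist w u
  obtain ⟨q, hq, hqlen⟩ := hT.connected.exists_path_of_dist u' v
  have hpside (z : V) (hz : z ∈ p.support) : T.dist z u < T.dist z u' := by
    have := dist_add_dist_of_mem_support hT.connected hplen hz
    have := hT.connected.dist_triangle (u := w) (v := z) (w := u')
    omega
  have hqside (z : V) (hz : z ∈ q.support) : T.dist z u' < T.dist z u := by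
    have hsum := dist_add_dist_of_mem_support hT.connected hqlen hz
    have htri := hT.connected.dist_triangle (u := v) (v := z) (w := u)
    rw [T.dist_comm (u := u'), T.dist_comm (v := v), T.dist_comm (v := v)] at hsum
    omega
  have hpath : (p.append (.cons huu' q)).IsPath := by
    rw [SimpleGraph.Walk.isPath_def, SimpleGraph.Walk.support_append,
      SimpleGraph.Walk.support_cons, List.tail_cons, List.nodup_append']
    exact ⟨hp.support_nodup, hq.support_nodup, fun z hzp hzq ↦
      (hpside z hzp).asymm (hqside z hzq)⟩
  have hlen := path_length_eq_dist hT hpath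
  rw [SimpleGraph.Walk.length_append, SimpleGraph.Walk.length_cons, hplen, hqlen] at hlen
  rw [← hlen, T.dist_comm (u := u')]
  omega

theorem four_point_condition (hT : T.IsTree) (u v w z : V) :
    T.dist u v + T.dist w z ≤
      max (T.dist w u + T.dist v z) (T.dist u z + T.dist w v) := by
  induction hd : T.dist u v generalizing u with
  | zero =>
    obtain rfl := hT.connected.dist_eq_zero_iff.1 hd
    exact le_max_of_le_left (by simpa using hT.connected.dist_triangle)
  | succ d ih =>
    obtain ⟨u', huu', hu'v⟩ := exists_dist_eq_of_le hT.connected (u := u) (v := v) (j := 1)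
      (by omega)
    have hadj : T.Adj u u' := SimpleGraph.dist_eq_one_iff_adj.1 huu'
    have hv : T.dist v u = T.dist v u' + 1 := by
      rw [T.dist_comm, T.dist_comm (u := v)]
      omega
    have hih := ih u' (by omega)
    have htri := hT.connected.dist_triangle (u := w) (v := u) (w := z)
    rw [T.dist_comm (u := u') (v := z)] at hih
    rw [T.dist_comm (u := u) (v := z)] at htri ⊢
    rw [T.dist_comm (u := v) (v := z)] at hih ⊢
    rw [T.dist_comm (u := w) (v := z)] at hih htri ⊢
    rw [T.dist_comm (v := v)] at hd
    rcases hT.dist_eq_dist_add_one_of_adj w hadj with hw | hw <;>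
    rcases hT.dist_eq_dist_add_one_of_adj z hadj with hz | hz
    · omega
    · have := dist_eq_of_adj_of_dist_eq_add_one hT hadj hz hv
      have := dist_eq_of_adj_of_dist_eq_add_one hT hadj hz hw
      omega
    · have := dist_eq_of_adj_of_dist_eq_add_one hT hadj hw hv
      have := dist_eq_of_adj_of_dist_eq_add_one hT hadj hw hz
      omega
    · have := dist_eq_of_adj_of_dist_eq_add_one hT hadj hw hv
      omega

theorem dist_le_dist_of_dist_lt_dist (hT : T.IsTree) (hv : T.dist v z ≤ T.dist u z)
    (hw : T.dist w z ≤ T.dist u z) (huv : T.dist u v < T.dist v w) : T.dist v w ≤ T.dist u w := by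
  have := four_point_condition hT v w u z
  omega

end TreeMetric

section EdgeSides

variable {V : Type*} {T : SimpleGraph V} {c : Bool → V} {s : ℕ} {u v w : V}

/-- The end of the edge `c false — c true` that is nearer to `v`. Indexing the two ends by `Bool`
lets the two sides of the edge be treated uniformly. -/
noncomputable def side (T : SimpleGraph V) (c : Bool → V) (v : V) : Bool :=
  decide (T.dist v (c true) < T.dist v (c false))

/-- The distance from `v` to the nearer end of the edge `c false — c true`. -/
noncomputable def depth (T : SimpleGraph V) (c : Bool → V) (v : V) : ℕ :=
  T.dist v (c (side T c v))

/-- `c false — c true` is the central edge of a tree of diameter `2 * s + 1`: each of its two sides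
has depth exactly `s`. -/
structure IsCentralEdge (T : SimpleGraph V) (s : ℕ) (c : Bool → V) : Prop where
  adj : T.Adj (c false) (c true)
  depth_le : ∀ v, depth T c v ≤ s
  exists_depth_eq : ∀ b, ∃ v, side T c v = b ∧ depth T c v = s

theorem dist_not_side_eq_depth_add_one (hT : T.IsTree) (hc : T.Adj (c false) (c true)) (v : V) :
    T.dist v (c (!side T c v)) = depth T c v + 1 := by
  rcases hT.dist_eq_dist_add_one_of_adj v hc with h | h <;> simp [depth, side, h]

theorem dist_eq_of_side_ne (hT : T.IsTree) (hc : T.Adj (c false) (c true))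
    (huv : side T c u ≠ side T c v) : T.dist u v = depth T c u + depth T c v + 1 := by
  have hv : side T c v = !side T c u := Bool.eq_not.2 huv.symm
  have hadj : T.Adj (c (side T c u)) (c (side T c v)) := by
    rw [hv]
    cases side T c u
    exacts [hc, hc.symm]
  refine dist_eq_of_adj_of_dist_eq_add_one hT hadj ?_ ?_
  · rw [hv]
    exact dist_not_side_eq_depth_add_one hT hc u
  · rw [Bool.eq_not.2 huv]
    exact dist_not_side_eq_depth_add_one hT hc v

theorem dist_le_of_side_eq (hT : T.Connected) (huv : side T c u = side T c v) :
    T.dist u v ≤ depth T c u + depth T c v := by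
  rw [depth, depth, huv, T.dist_comm (u := v)]
  exact hT.dist_triangle

theorem exists_adj_depth_eq (hT : T.IsTree) (hc : T.Adj (c false) (c true))
    (hv : depth T c v = s + 1) : ∃ a, T.Adj v a ∧ side T c a = side T c v ∧ depth T c a = s := by
  obtain ⟨a, hva, hac⟩ := exists_dist_eq_of_le hT.connected (G := T) (u := v)
    (v := c (side T c v)) (j := 1) (by rw [← depth]; omega)
  rw [← depth, hv, Nat.add_sub_cancel] at hac
  have hside : side T c a = side T c v := by
    by_contra hne
    have := dist_eq_of_side_ne hT hc hne
    rw [T.dist_comm] at this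
    omega
  exact ⟨a, SimpleGraph.dist_eq_one_iff_adj.1 hva, hside, by rw [depth, hside, hac]⟩

theorem IsCentralEdge.exists_dist_eq (hT : T.IsTree) (h : IsCentralEdge T s c) (v : V) :
    ∃ z, T.dist v z = depth T c v + s + 1 := by
  obtain ⟨z, hz, hzs⟩ := h.exists_depth_eq (!side T c v)
  exact ⟨z, by rw [dist_eq_of_side_ne hT h.adj (by simp [hz]), hzs]⟩

theorem exists_isCentralEdge_of_dist_eq (hT : T.IsTree) (hdiam : ∀ u v, T.dist u v ≤ 2 * s + 1)
    (huv : T.dist u v = 2 * s + 1) : ∃ c, IsCentralEdge T s c := by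
  obtain ⟨a, hua, hav⟩ := exists_dist_eq_of_le hT.connected (u := u) (v := v) (j := s) (by omega)
  obtain ⟨b, hab, hbv⟩ := exists_dist_eq_of_le hT.connected (u := a) (v := v) (j := 1) (by omega)
  have hadj : T.Adj a b := SimpleGraph.dist_eq_one_iff_adj.1 hab
  let c : Bool → V := fun i ↦ cond i b a
  have hub := hT.connected.dist_triangle (u := u) (v := b) (w := v)
  have hu : side T c u = false := by
    simp only [side, c, cond_true, cond_false, decide_eq_false_iff_not]
    omega
  have hv : side T c v = true := by
    simp only [side, c, cond_true, cond_false, decide_eq_true_eq, T.dist_comm (u := v)]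
    omega
  have hud : depth T c u = s := by rw [depth, hu]; exact hua
  have hvd : depth T c v = s := by
    rw [depth, hv, T.dist_comm]
    exact hbv.trans (by omega)
  have hends (i : Bool) : ∃ z, side T c z = i ∧ depth T c z = s := by
    cases i
    exacts [⟨u, hu, hud⟩, ⟨v, hv, hvd⟩]
  refine ⟨c, hadj, fun x ↦ ?_, hends⟩
  obtain ⟨z, hz, hzs⟩ := hends (!side T c x)
  have := dist_eq_of_side_ne hT (c := c) hadj (u := x) (v := z) (by simp [hz])
  have := hdiam x z
  omega

end EdgeSides

section DeepestFirst

variable {V : Type*} {T : SimpleGraph V} {c : Bool → V} {r : ℕ} {X : Set V} {v w x : V}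

/-- `X` is a `2r`-MDIS as produced by a greedy choice among the deepest vertices, those of depth
`r + 1`, first: its own deepest members already dominate all the deepest vertices. -/
structure IsDeepestFirst (T : SimpleGraph V) (r : ℕ) (c : Bool → V) (X : Set V) : Prop where
  maximal : MaxDkIndep T (2 * r) X
  exists_deep_dist_le : ∀ v, depth T c v = r + 1 →
    ∃ x ∈ X, depth T c x = r + 1 ∧ T.dist x v ≤ 2 * r

theorem exists_isDeepestFirst [Finite V] (T : SimpleGraph V) (r : ℕ) (c : Bool → V) :
    ∃ X, IsDeepestFirst T r c X :=
  have ⟨X, hX, hdeep⟩ :=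
    exists_maxDkIndep_forall_exists_dist_le T (2 * r) {v | depth T c v = r + 1}
  ⟨X, hX, hdeep⟩

namespace IsDeepestFirst

theorem exists_mem_side (hT : T.IsTree) (h : IsCentralEdge T (r + 1) c)
    (hX : IsDeepestFirst T r c X) (b : Bool) :
    ∃ x ∈ X, side T c x = b ∧ depth T c x = r + 1 := by
  obtain ⟨v, hvb, hv⟩ := h.exists_depth_eq b
  obtain ⟨x, hxX, hx, hxv⟩ := hX.exists_deep_dist_le v hv
  refine ⟨x, hxX, ?_, hx⟩
  by_contra hne
  have := dist_eq_of_side_ne hT h.adj (hvb ▸ hne)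
  omega

theorem le_depth_of_mem (hT : T.IsTree) (h : IsCentralEdge T (r + 1) c)
    (hX : IsDeepestFirst T r c X) (hv : v ∈ X) : r ≤ depth T c v := by
  obtain ⟨x, hxX, hside, hx⟩ := hX.exists_mem_side hT h (side T c v)
  by_contra! hlt
  have hxv : x = v := hX.maximal.1.eq_of_dist_le hxX hv
    ((dist_le_of_side_eq hT.connected hside).trans (by omega))
  subst hxv
  omega

theorem depth_lt_of_mem_conflicts (hT : T.IsTree) (h : IsCentralEdge T (r + 1) c)
    (hX : IsDeepestFirst T r c X) (hx : x ∈ conflicts T (2 * r) X {v})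
    (hside : side T c x ≠ side T c v) : depth T c v < r := by
  obtain ⟨hxX, hxv⟩ := mem_conflicts_singleton.1 hx
  have := dist_eq_of_side_ne hT h.adj hside
  have := hX.le_depth_of_mem hT h hxX
  omega

theorem exists_mem_conflicts_side_eq (hT : T.IsTree) (h : IsCentralEdge T (r + 1) c)
    (hX : IsDeepestFirst T r c X) (v : V) :
    ∃ x ∈ conflicts T (2 * r) X {v}, side T c x = side T c v := by
  by_cases hv : depth T c v < r
  · obtain ⟨x, hxX, hside, hx⟩ := hX.exists_mem_side hT h (side T c v)
    have := dist_le_of_side_eq hT.connected hside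
    exact ⟨x, mem_conflicts_singleton.2 ⟨hxX, by omega⟩, hside⟩
  · obtain ⟨x, hx⟩ := hX.maximal.conflicts_nonempty (Set.singleton_nonempty v)
    exact ⟨x, hx, by_contra fun hne ↦ hv (hX.depth_lt_of_mem_conflicts hT h hx hne)⟩

theorem conflicts_ne_of_depth_eq (hT : T.IsTree) (h : IsCentralEdge T (r + 1) c)
    (hX : IsDeepestFirst T r c X) (hside : side T c v = side T c w) (hv : depth T c v = r + 1)
    (hvw : 2 * r < T.dist v w) :
    conflicts T (2 * r) X {v} ≠ conflicts T (2 * r) X {w} := by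
  obtain ⟨x, hxX, hx, hxv⟩ := hX.exists_deep_dist_le v hv
  have hxconf : x ∈ conflicts T (2 * r) X {v} := mem_conflicts_singleton.2 ⟨hxX, hxv⟩
  have hxside : side T c x = side T c v := by
    by_contra hne
    have := hX.depth_lt_of_mem_conflicts hT h hxconf hne
    omega
  have hw := h.depth_le w
  rw [← hx, depth, depth, ← hside, hxside] at hw
  rw [← hx, depth, depth, hxside] at hv
  have hxw : T.dist v w ≤ T.dist x w :=
    dist_le_dist_of_dist_lt_dist hT hv.le hw (hxv.trans_lt hvw)
  intro hEq
  exact (hvw.trans_le hxw).not_ge (mem_conflicts_singleton.1 (hEq ▸ hxconf)).2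

theorem conflicts_ne_of_lt_dist (hT : T.IsTree) (h : IsCentralEdge T (r + 1) c)
    (hX : IsDeepestFirst T r c X) (hvw : 2 * r < T.dist v w) :
    conflicts T (2 * r) X {v} ≠ conflicts T (2 * r) X {w} := by
  by_cases hside : side T c v = side T c w
  · have hsum := dist_le_of_side_eq hT.connected hside
    have hw_le := h.depth_le w
    by_cases hv : depth T c v = r + 1
    · exact hX.conflicts_ne_of_depth_eq hT h hside hv hvw
    · have hv_le := h.depth_le v
      exact (hX.conflicts_ne_of_depth_eq hT h hside.symm (by omega)
        (T.dist_comm (u := v) ▸ hvw)).symm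
  · intro hEq
    obtain ⟨x, hx, hxv⟩ := hX.exists_mem_conflicts_side_eq hT h v
    obtain ⟨y, hy, hyw⟩ := hX.exists_mem_conflicts_side_eq hT h w
    have := hX.depth_lt_of_mem_conflicts hT h (hEq ▸ hx) (hxv ▸ hside)
    have := hX.depth_lt_of_mem_conflicts hT h (hEq ▸ hy) (hyw ▸ Ne.symm hside)
    have := dist_eq_of_side_ne hT h.adj hside
    omega

theorem conflicts_pair_ne (hT : T.IsTree) (h : IsCentralEdge T (r + 1) c)
    (hX : IsDeepestFirst T r c X) {a : Bool → V} (ha_side : ∀ i, side T c (a i) = i)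
    (ha_depth : ∀ i, depth T c (a i) = r)
    (hindep : DkIndep T (2 * r) ({a false, a true} ∪ {v})) :
    conflicts T (2 * r) X {a false, a true} ≠ conflicts T (2 * r) X {v} := by
  intro hEq
  have ha_mem (i : Bool) : a i ∈ ({a false, a true} : Set V) := by cases i <;> simp
  have hv : depth T c v < r := by
    obtain ⟨x, hx, hxside⟩ := hX.exists_mem_conflicts_side_eq hT h (a (!side T c v))
    have hxv : x ∈ conflicts T (2 * r) X {v} :=
      hEq ▸ conflicts_mono (Set.singleton_subset_iff.2 (ha_mem _)) hx
    exact hX.depth_lt_of_mem_conflicts hT h hxv (by simp [hxside, ha_side])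
  have hnear : T.dist (a (side T c v)) v ≤ 2 * r := by
    have := dist_le_of_side_eq hT.connected (ha_side (side T c v))
    have := ha_depth (side T c v)
    omega
  have hav : a (side T c v) = v :=
    hindep.eq_of_dist_le (Or.inl (ha_mem _)) (Or.inr rfl) hnear
  exact hv.ne (hav ▸ ha_depth (side T c v))

theorem exists_notMem_depth_eq (hT : T.IsTree) (h : IsCentralEdge T (r + 1) c)
    (hX : IsDeepestFirst T r c X) (hr : 1 ≤ r) (b : Bool) :
    ∃ a ∉ X, side T c a = b ∧ depth T c a = r := by
  obtain ⟨x, hxX, hxb, hx⟩ := hX.exists_mem_side hT h b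
  obtain ⟨a, hxa, ha_side, ha⟩ := exists_adj_depth_eq hT h.adj hx
  refine ⟨a, fun haX ↦ hxa.ne (hX.maximal.1.eq_of_dist_le hxX haX ?_), ha_side.trans hxb, ha⟩
  rw [SimpleGraph.dist_eq_one_iff_adj.2 hxa]
  omega

theorem card_add_two_le_mdi_add_ncard [Finite V] (hT : T.IsTree) (h : IsCentralEdge T (r + 1) c)
    (hX : IsDeepestFirst T r c X) (hr : 1 ≤ r) :
    Nat.card V + 2 ≤ mdi T (2 * r) + X.ncard := by
  choose a haX ha_side ha_depth using hX.exists_notMem_depth_eq hT h hr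
  have hfar : 2 * r < T.dist (a false) (a true) := by
    rw [dist_eq_of_side_ne hT h.adj (by simp [ha_side]), ha_depth, ha_depth]
    omega
  exact hX.maximal.card_add_two_le_mdi_add_ncard
    (fun _ _ _ _ hvw ↦ hX.conflicts_ne_of_lt_dist hT h hvw) (haX false) (haX true) hfar
    fun _ hindep ↦ hX.conflicts_pair_ne hT h ha_side ha_depth hindep

end IsDeepestFirst

theorem IsCentralEdge.card_add_two_le_mdi_add_div [Finite V] (hT : T.IsTree)
    (h : IsCentralEdge T (r + 1) c) (hr : 1 ≤ r) :
    Nat.card V + 2 ≤ mdi T (2 * r) + Nat.card V / (r + 1) := by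
  obtain ⟨X, hX⟩ := exists_isDeepestFirst T r c
  have hpack : X.ncard ≤ Nat.card V / (r + 1) := by
    refine (Nat.le_div_iff_mul_le r.succ_pos).2
      (hX.maximal.1.ncard_mul_le_card hT.connected fun v _ ↦ ?_)
    obtain ⟨z, hz⟩ := h.exists_dist_eq hT v
    exact ⟨z, by omega⟩
  exact (hX.card_add_two_le_mdi_add_ncard hT h hr).trans (by omega)

end DeepestFirst

section Diameter

variable {V : Type*} [Fintype V] {G : SimpleGraph V}

theorem dist_le_gdiam (G : SimpleGraph V) (u v : V) : G.dist u v ≤ gdiam G :=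
  (Finset.le_sup (f := G.dist u) (Finset.mem_univ v)).trans
    (Finset.le_sup (f := ecc G) (Finset.mem_univ u))

theorem exists_dist_eq_gdiam [Nonempty V] (G : SimpleGraph V) :
    ∃ u v, G.dist u v = gdiam G := by
  obtain ⟨u, -, hu⟩ := Finset.exists_mem_eq_sup Finset.univ Finset.univ_nonempty (ecc G)
  obtain ⟨v, -, hv⟩ := Finset.exists_mem_eq_sup Finset.univ Finset.univ_nonempty (G.dist u)
  exact ⟨u, v, hv.symm.trans hu.symm⟩

theorem exists_isCentralEdge_of_gdiam_eq {s : ℕ} (hG : G.IsTree) (hdiam : gdiam G = 2 * s + 1) :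
    ∃ c, IsCentralEdge G s c :=
  have := hG.connected.nonempty
  have ⟨_, _, huv⟩ := exists_dist_eq_gdiam G
  exists_isCentralEdge_of_dist_eq hG (fun u v ↦ hdiam ▸ dist_le_gdiam G u v) (huv.trans hdiam)

end Diameter

theorem fk_two_mul_add_div_le (r n : ℕ) : fk (2 * r) n + n / (r + 1) ≤ n + 1 := by
  unfold fk
  split_ifs with hn
  · have : n / (r + 1) < 2 := Nat.div_lt_of_lt_mul (by omega)
    omega
  · have : n / (r + 1) ≤ n := Nat.div_le_self n (r + 1)
    rw [Nat.mul_mod_right, Nat.sub_zero, Nat.mul_div_cancel_left r two_pos]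
    omega

/-- Let `k ≥ 2` be even and let `T` be a tree on `n` vertices of diameter
exactly `k + 3`. Then `mdi_k(T) > f_k(n)`. -/
theorem stmt_13 (k : ℕ) (hk : 2 ≤ k) (hke : Even k) {V : Type} [Fintype V]
    {n : ℕ} (hn : Fintype.card V = n) (T : SimpleGraph V) (hT : T.IsTree)
    (hdiam : gdiam T = k + 3) :
    fk k n < mdi T k := by
  obtain ⟨r, rfl⟩ := even_iff_exists_two_mul.1 hke
  obtain ⟨c, hc⟩ := exists_isCentralEdge_of_gdiam_eq (s := r + 1) hT (by omega)
  have hcount := hc.card_add_two_le_mdi_add_div hT (by omega)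
  rw [Nat.card_eq_fintype_card, hn] at hcount
  have hfk := fk_two_mul_add_div_le r n
  omega
end

section
/- Let k ≥ 3 be odd and let T be a tree on n vertices of diameter k + 1, where n = p·(⌊k/2⌋+1) + r + 1 with p ≥ 2 and 0 ≤ r ≤ ⌊k/2⌋. Then mdi_k(T) ≥ f_k(n), with equality if and only if T contains a subtree isomorphic to S_{p,⌊k/2⌋+1} and T contains no k-special pair. -/
/-!
A tree of even diameter `k + 1 = 2 * m` has a center `c` at distance at most `m` from every vertex,
and two vertices are more than `k` apart exactly when both lie at distance `m` from `c`, in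
different branches at `c`. So being more than `k` apart is a complete multipartite relation on
the `m`-sphere around `c`, with the `q ≥ 2` branches reaching depth `m` as parts, of sizes
`a₁, …, a_q ≥ 1`; the other vertices are related to nothing. A maximal distance-`k` independent set
is therefore either a single vertex off the sphere or a transversal of the parts, which gives
`mdi_k(T) = (n - ∑ aᵢ) + ∏ aᵢ ≥ n - q + 1`, with equality iff at most one `aᵢ` exceeds `1`, that is,
iff there is no `k`-special pair. Finally `q * m + 1 ≤ n = p * m + r + 1` with `r < m` forces
`q ≤ p`, while `T` contains the spider with `p ≥ 2` legs of length `m` iff `p ≤ q`.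
-/

namespace DistanceIndependence

open SimpleGraph hiding ball
open Finset

section ProductSum

variable {ι : Type*} {s : Finset ι} {a : ι → ℕ}

lemma sum_add_one_le_prod_add_card (ha : ∀ i ∈ s, 1 ≤ a i) :
    ∑ i ∈ s, a i + 1 ≤ ∏ i ∈ s, a i + #s := by
  classical
  induction s using Finset.induction_on with
  | empty => simp
  | insert x s hx ih =>
    rw [forall_mem_insert] at ha
    have hprod : 1 ≤ ∏ i ∈ s, a i := Finset.one_le_prod' ha.2
    rw [sum_insert hx, prod_insert hx, card_insert_of_notMem hx]
    nlinarith [ih ha.2, Nat.mul_le_mul (Nat.sub_le (a x) 1) hprod, ha.1]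

lemma sum_add_one_eq_prod_add_card_iff (ha : ∀ i ∈ s, 1 ≤ a i) :
    ∑ i ∈ s, a i + 1 = ∏ i ∈ s, a i + #s ↔
      (s : Set ι).Pairwise fun i j => a i = 1 ∨ a j = 1 := by
  classical
  induction s using Finset.induction_on with
  | empty => simp
  | insert x s hx ih =>
    rw [forall_mem_insert] at ha
    have hprod : 1 ≤ ∏ i ∈ s, a i := Finset.one_le_prod' ha.2
    have hprod_one : ∏ i ∈ s, a i = 1 ↔ ∀ i ∈ s, a i = 1 := by simp [Finset.prod_eq_one_iff]
    have hle := sum_add_one_le_prod_add_card ha.2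
    have : Std.Symm fun i j => a i = 1 ∨ a j = 1 := ⟨fun _ _ => Or.symm⟩
    rw [coe_insert, Set.pairwise_insert_of_symm_of_notMem (by simpa using hx), ← ih ha.2,
      sum_insert hx, prod_insert hx, card_insert_of_notMem hx]
    simp only [mem_coe, forall_or_left, ← hprod_one]
    obtain ⟨e, he⟩ := Nat.exists_eq_add_of_le ha.1
    obtain ⟨d, hd⟩ := Nat.exists_eq_add_of_le hprod
    have hzero : e * d = 0 ↔ a x = 1 ∨ ∏ i ∈ s, a i = 1 := by rw [mul_eq_zero]; omega
    have hexpand : a x * ∏ i ∈ s, a i + 1 = a x + ∏ i ∈ s, a i + e * d := by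
      rw [he, hd]
      ring
    rw [← hzero]
    omega

end ProductSum

section Transversals

variable {α ι : Type*} [DecidableEq ι]

lemma bijOn_image_iff_exists_range_eq {D : Finset α} {b : α → ι} {J : Set α} :
    J ⊆ D ∧ Set.BijOn b J (b '' D) ↔
      ∃ σ : (i : D.image b) → ({x ∈ D | b x = i} : Finset α),
        (Set.range fun i => (σ i : α)) = J := by
  constructor
  · rintro ⟨hJD, -, hinj, hsurj⟩
    have (i : D.image b) : ∃ x : ({x ∈ D | b x = i} : Finset α), (x : α) ∈ J := by
      obtain ⟨x, hx, hxi⟩ := hsurj (mem_image.1 i.2)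
      exact ⟨⟨x, mem_filter.2 ⟨hJD hx, hxi⟩⟩, hx⟩
    choose σ hσ using this
    refine ⟨σ, (Set.range_subset_iff.2 hσ).antisymm fun x hx => ?_⟩
    exact ⟨⟨b x, mem_image_of_mem b (hJD hx)⟩, hinj (hσ _) hx (mem_filter.1 (σ _).2).2⟩
  · rintro ⟨σ, rfl⟩
    have hσD i : (σ i : α) ∈ D := (mem_filter.1 (σ i).2).1
    have hσb i : b (σ i) = i := (mem_filter.1 (σ i).2).2
    refine ⟨Set.range_subset_iff.2 hσD, ?_, ?_, ?_⟩
    · rintro _ ⟨i, rfl⟩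
      exact ⟨σ i, hσD i, rfl⟩
    · rintro _ ⟨i, rfl⟩ _ ⟨j, rfl⟩ hij
      have : i = j := Subtype.ext ((hσb i).symm.trans (hij.trans (hσb j)))
      rw [this]
    · rintro _ ⟨y, hy, rfl⟩
      exact ⟨_, ⟨⟨b y, mem_image_of_mem b hy⟩, rfl⟩, hσb _⟩

lemma ncard_transversals (D : Finset α) (b : α → ι) :
    {J : Set α | J ⊆ D ∧ Set.BijOn b J (b '' D)}.ncard =
      ∏ i ∈ D.image b, #{x ∈ D | b x = i} := by
  let rangeOf (σ : (i : D.image b) → ({x ∈ D | b x = i} : Finset α)) : Set α :=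
    Set.range fun i => (σ i : α)
  have rangeOf_injective : Function.Injective rangeOf := by
    intro σ τ hστ
    funext i
    obtain ⟨j, hj : (τ j : α) = σ i⟩ : (σ i : α) ∈ rangeOf τ := hστ ▸ ⟨i, rfl⟩
    obtain rfl : j = i := Subtype.ext <| by
      rw [← (mem_filter.1 (τ j).2).2, hj, (mem_filter.1 (σ i).2).2]
    exact Subtype.ext hj.symm
  have hrange : {J : Set α | J ⊆ D ∧ Set.BijOn b J (b '' D)} = Set.range rangeOf :=
    Set.ext fun J => bijOn_image_iff_exists_range_eq
  rw [hrange, Set.ncard_range_of_injective rangeOf_injective, Nat.card_pi,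
    ← prod_coe_sort (D.image b) fun i => #{x ∈ D | b x = i}]
  simp only [Nat.card_eq_fintype_card, Fintype.card_coe]

end Transversals

/-- The graph joining the vertices of `G` at distance more than `k` is complete multipartite on `D`,
the parts being the fibres of `b` on `D`, and the vertices outside `D` are isolated in it. -/
def IsFarMultipartition {V ι : Type*} (G : SimpleGraph V) (k : ℕ) (D : Set V) (b : V → ι) : Prop :=
  ∀ u v, k + 1 ≤ G.dist u v ↔ u ∈ D ∧ v ∈ D ∧ b u ≠ b v

namespace IsFarMultipartition

section Structure

variable {V ι : Type*} {G : SimpleGraph V} {k : ℕ} {D : Set V} {b : V → ι}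

lemma dkIndep_iff (h : IsFarMultipartition G k D b) {J : Set V} :
    DkIndep G k J ↔ J.Subsingleton ∨ J ⊆ D ∧ J.InjOn b := by
  constructor
  · refine fun hJ => or_iff_not_imp_left.2 fun hns => ⟨fun u hu => ?_, fun u hu v hv huv => ?_⟩
    · obtain ⟨v, hv, hvu⟩ := (Set.not_subsingleton_iff.1 hns).exists_ne u
      exact ((h u v).1 (hJ hu hv hvu.symm)).1
    · by_contra hne
      exact ((h u v).1 (hJ hu hv hne)).2.2 huv
  · rintro (hJ | ⟨hJD, hinj⟩) u hu v hv huv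
    · exact absurd (hJ hu hv) huv
    · exact (h u v).2 ⟨hJD hu, hJD hv, hinj.ne hu hv huv⟩

lemma maxDkIndep_singleton (h : IsFarMultipartition G k D b) {v : V} (hv : v ∉ D) :
    MaxDkIndep G k {v} := by
  refine ⟨h.dkIndep_iff.2 (.inl Set.subsingleton_singleton), fun J hJ hvJ => ?_⟩
  rw [Set.singleton_subset_iff] at hvJ
  obtain hsub | hJD := h.dkIndep_iff.1 hJ
  · exact hsub.eq_singleton_of_mem hvJ
  · exact absurd (hJD.1 hvJ) hv

lemma maxDkIndep_transversal (h : IsFarMultipartition G k D b) (hD : D.Nonempty) {J : Set V}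
    (hJD : J ⊆ D) (hb : Set.BijOn b J (b '' D)) : MaxDkIndep G k J := by
  refine ⟨h.dkIndep_iff.2 (.inr ⟨hJD, hb.injOn⟩), fun J' hJ' hJJ' => ?_⟩
  refine Set.Subset.antisymm (fun w hw => ?_) hJJ'
  obtain hsub | ⟨hJ'D, hinj⟩ := h.dkIndep_iff.1 hJ'
  · obtain ⟨y, hy⟩ := hD
    obtain ⟨x, hx, -⟩ := hb.surjOn (Set.mem_image_of_mem b hy)
    exact hsub (hJJ' hx) hw ▸ hx
  · obtain ⟨x, hx, hxw⟩ := hb.surjOn (Set.mem_image_of_mem b (hJ'D hw))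
    exact hinj (hJJ' hx) hw hxw ▸ hx

lemma maxDkIndep_iff (h : IsFarMultipartition G k D b) (hD : D.Nonempty) {J : Set V} :
    MaxDkIndep G k J ↔ (∃ v ∉ D, J = {v}) ∨ J ⊆ D ∧ Set.BijOn b J (b '' D) := by
  constructor
  · rintro ⟨hJ, hmax⟩
    by_cases hJD : J ⊆ D
    · have hinj : J.InjOn b := (h.dkIndep_iff.1 hJ).elim (·.injOn b) And.right
      refine .inr ⟨hJD, (Set.mapsTo_image b D).mono_left hJD, hinj, ?_⟩
      rintro _ ⟨y, hy, rfl⟩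
      by_contra hyJ
      have hins : DkIndep G k (insert y J) := h.dkIndep_iff.2 <| .inr
        ⟨Set.insert_subset hy hJD,
          (Set.injOn_insert fun hyJ' => hyJ ⟨y, hyJ', rfl⟩).2 ⟨hinj, hyJ⟩⟩
      rw [← hmax _ hins (Set.subset_insert y J)] at hyJ
      exact hyJ (Set.mem_image_of_mem b (Set.mem_insert y J))
    · obtain ⟨v, hv, hvD⟩ := Set.not_subset.1 hJD
      have hsub : J.Subsingleton := (h.dkIndep_iff.1 hJ).resolve_right fun hJ' => hJD hJ'.1
      exact .inl ⟨v, hvD, hsub.eq_singleton_of_mem hv⟩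
  · rintro (⟨v, hv, rfl⟩ | ⟨hJD, hb⟩)
    · exact h.maxDkIndep_singleton hv
    · exact h.maxDkIndep_transversal hD hJD hb

lemma mem_ball_iff (h : IsFarMultipartition G k D b) {x z : V} :
    z ∈ ball G k x ↔ (x ∈ D → z ∈ D → b x = b z) := by
  have : z ∈ ball G k x ↔ ¬ k + 1 ≤ G.dist x z := by
    rw [Nat.add_one_le_iff, not_lt]
    rfl
  rw [this, h]
  tauto

lemma ball_eq_ball_iff (h : IsFarMultipartition G k D b) (hb : (b '' D).Nontrivial) {x y : V}
    (hx : x ∈ D) : ball G k x = ball G k y ↔ y ∈ D ∧ b x = b y := by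
  constructor
  · intro hxy
    obtain ⟨_, ⟨z, hz, rfl⟩, hzx⟩ := hb.exists_ne (b x)
    have hzball : z ∉ ball G k y := by
      rw [← hxy, h.mem_ball_iff]
      exact fun hxz => hzx (hxz hx hz).symm
    have hy : y ∈ D := by
      by_contra hy
      exact hzball (h.mem_ball_iff.2 fun hy' => absurd hy' hy)
    have hyball : y ∈ ball G k x := by
      rw [hxy, h.mem_ball_iff]
      exact fun _ _ => rfl
    exact ⟨hy, h.mem_ball_iff.1 hyball hx hy⟩
  · rintro ⟨hy, hbxy⟩
    ext z
    simp only [h.mem_ball_iff, hx, hy, hbxy]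

end Structure

section Counting

variable {V ι : Type*} [DecidableEq ι] {G : SimpleGraph V} {k : ℕ} {D : Finset V} {b : V → ι}

lemma one_le_card_fibre {i : ι} (hi : i ∈ D.image b) : 1 ≤ #{x ∈ D | b x = i} := by
  obtain ⟨x, hx, hxi⟩ := mem_image.1 hi
  exact card_pos.2 ⟨x, mem_filter.2 ⟨hx, hxi⟩⟩

lemma card_le_card_image (h : IsFarMultipartition G k D b) {κ : Type*} [Fintype κ] [Nontrivial κ]
    {x : κ → V} (hx : Pairwise fun i j => k + 1 ≤ G.dist (x i) (x j)) :
    Fintype.card κ ≤ #(D.image b) := by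
  refine card_le_card_of_injOn (fun i => b (x i)) (fun i _ => ?_) fun i _ j _ hij => ?_
  · obtain ⟨j, hji⟩ := exists_ne i
    exact mem_image_of_mem b ((h _ _).1 (hx hji.symm)).1
  · by_contra hne
    exact ((h _ _).1 (hx hne)).2.2 hij

lemma kTwin_iff (h : IsFarMultipartition G k D b) (hb : (b '' D).Nontrivial) {x : V} (hx : x ∈ D) :
    KTwin G k x ↔ #{y ∈ D | b y = b x} ≠ 1 := by
  have hone : #{y ∈ D | b y = b x} = 1 ↔ ∀ y ∈ D, b y = b x → y = x := by
    rw [← (one_le_card_fibre (mem_image_of_mem b hx)).ge_iff_eq', card_le_one_iff]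
    simp only [mem_filter]
    grind
  rw [Ne, hone]
  simp only [KTwin, h.ball_eq_ball_iff hb hx]
  grind

variable [Fintype V]

lemma mdi_add_card (h : IsFarMultipartition G k D b) (hD : D.Nonempty) :
    mdi G k + #D = Fintype.card V + ∏ i ∈ D.image b, #{x ∈ D | b x = i} := by
  classical
  have hunion : {J : Set V | MaxDkIndep G k J} =
      (fun v => {v}) '' ((Dᶜ : Finset V) : Set V) ∪
        {J : Set V | J ⊆ D ∧ Set.BijOn b J (b '' D)} := by
    ext J
    simp [h.maxDkIndep_iff hD, eq_comm]
  have hdisj : Disjoint ((fun v => {v}) '' ((Dᶜ : Finset V) : Set V))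
      {J : Set V | J ⊆ D ∧ Set.BijOn b J (b '' D)} := by
    rw [Set.disjoint_left]
    rintro _ ⟨v, hv, rfl⟩ ⟨hvD, -⟩
    exact mem_compl.1 hv (Set.singleton_subset_iff.1 hvD)
  rw [mdi, hunion, Set.ncard_union_eq hdisj, Set.ncard_image_of_injective _ Set.singleton_injective,
    Set.ncard_coe_finset, ncard_transversals, ← card_compl_add_card D]
  ring

lemma card_add_one_le_mdi_add_card_image (h : IsFarMultipartition G k D b) (hD : D.Nonempty) :
    Fintype.card V + 1 ≤ mdi G k + #(D.image b) := by
  have hle := sum_add_one_le_prod_add_card fun i => one_le_card_fibre (D := D) (b := b) (i := i)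
  rw [← card_eq_sum_card_image] at hle
  have := h.mdi_add_card hD
  omega

lemma mdi_add_card_image_eq_iff (h : IsFarMultipartition G k D b) (hD : D.Nonempty) :
    mdi G k + #(D.image b) = Fintype.card V + 1 ↔
      (D.image b : Set ι).Pairwise fun i j =>
        #{x ∈ D | b x = i} = 1 ∨ #{x ∈ D | b x = j} = 1 := by
  rw [← sum_add_one_eq_prod_add_card_iff fun i => one_le_card_fibre (i := i),
    ← card_eq_sum_card_image]
  have := h.mdi_add_card hD
  omega

end Counting

end IsFarMultipartition

section Eccentricity

variable {V : Type*} [Fintype V] {G : SimpleGraph V}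

lemma dist_le_ecc (u v : V) : G.dist u v ≤ ecc G u :=
  le_sup (f := G.dist u) (mem_univ v)

lemma ecc_le_gdiam (u : V) : ecc G u ≤ gdiam G :=
  le_sup (f := ecc G) (mem_univ u)

lemma exists_dist_eq_ecc (u : V) : ∃ v, G.dist u v = ecc G u := by
  obtain ⟨v, -, hv⟩ := exists_mem_eq_sup univ ⟨u, mem_univ u⟩ (G.dist u)
  exact ⟨v, hv.symm⟩

lemma exists_dist_eq_gdiam [Nonempty V] : ∃ u v, G.dist u v = gdiam G := by
  obtain ⟨u, -, hu⟩ := exists_mem_eq_sup univ univ_nonempty (ecc G)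
  obtain ⟨v, hv⟩ := exists_dist_eq_ecc (G := G) u
  exact ⟨u, v, hv.trans hu.symm⟩

end Eccentricity

namespace IsFarMultipartition

section SpecialPairs

variable {V ι : Type*} [Fintype V] {G : SimpleGraph V} {k : ℕ} {b : V → ι}

lemma isDiametralLeaf_iff {D : Set V} (h : IsFarMultipartition G k D b) (hb : (b '' D).Nontrivial)
    (hdiam : gdiam G = k + 1) (hleaf : ∀ x ∈ D, IsLeaf G x) {x : V} :
    IsDiametralLeaf G x ↔ x ∈ D := by
  constructor
  · rintro ⟨-, hecc⟩
    obtain ⟨z, hz⟩ := exists_dist_eq_ecc (G := G) x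
    exact ((h x z).1 (by omega)).1
  · intro hx
    obtain ⟨_, ⟨z, hz, rfl⟩, hzx⟩ := hb.exists_ne (b x)
    have hxz : k + 1 ≤ G.dist x z := (h x z).2 ⟨hx, hz, hzx.symm⟩
    exact ⟨hleaf x hx, (ecc_le_gdiam x).antisymm (hdiam ▸ hxz.trans (dist_le_ecc x z))⟩

variable [DecidableEq ι] {D : Finset V}

lemma forall_not_kSpecial_iff (h : IsFarMultipartition G k D b) (hb : (b '' D).Nontrivial)
    (hdiam : gdiam G = k + 1) (hleaf : ∀ x ∈ D, IsLeaf G x) :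
    (∀ x y, ¬ KSpecial G k x y) ↔
      (D.image b : Set ι).Pairwise fun i j =>
        #{x ∈ D | b x = i} = 1 ∨ #{x ∈ D | b x = j} = 1 := by
  have hspecial x y : KSpecial G k x y ↔ x ∈ D ∧ y ∈ D ∧ #{z ∈ D | b z = b x} ≠ 1 ∧
      #{z ∈ D | b z = b y} ≠ 1 ∧ b x ≠ b y := by
    simp only [KSpecial, h.isDiametralLeaf_iff hb hdiam hleaf, mem_coe]
    constructor
    · rintro ⟨hx, hy, hxt, hyt, hxy⟩
      rw [h.kTwin_iff hb hx] at hxt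
      rw [h.kTwin_iff hb hy] at hyt
      exact ⟨hx, hy, hxt, hyt, fun hbxy => hxy ((h.ball_eq_ball_iff hb hx).2 ⟨hy, hbxy⟩)⟩
    · rintro ⟨hx, hy, hxt, hyt, hxy⟩
      exact ⟨hx, hy, (h.kTwin_iff hb hx).2 hxt, (h.kTwin_iff hb hy).2 hyt,
        fun hball => hxy ((h.ball_eq_ball_iff hb hx).1 hball).2⟩
  simp only [hspecial, coe_image, Set.Pairwise, Set.forall_mem_image, mem_coe]
  grind

end SpecialPairs

end IsFarMultipartition

section Distance

variable {V W : Type*} {G : SimpleGraph V} {H : SimpleGraph W}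

lemma exists_dist_eq_of_dist_eq_add (hG : G.Connected) {u v : V} {i j : ℕ}
    (h : G.dist u v = i + j) : ∃ c, G.dist u c = i ∧ G.dist c v = j := by
  obtain ⟨p, hp⟩ := hG.exists_walk_length_eq_dist u v
  have hfst : G.dist u (p.getVert i) ≤ i := (dist_le (p.take i)).trans (by simp)
  have hsnd : G.dist (p.getVert i) v ≤ j := (dist_le (p.drop i)).trans (by simp; omega)
  have htri := hG.dist_triangle (u := u) (v := p.getVert i) (w := v)
  exact ⟨p.getVert i, by omega, by omega⟩

lemma sub_le_dist {φ : V → ℤ} (hφ : ∀ a b, G.Adj a b → φ b ≤ φ a + 1) {u v : V}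
    (huv : G.Reachable u v) : φ v - φ u ≤ G.dist u v := by
  have walk_bound : ∀ {u v : V} (p : G.Walk u v), φ v - φ u ≤ p.length := by
    intro u v p
    induction p with
    | nil => simp
    | cons hadj p ih =>
      have := hφ _ _ hadj
      rw [Walk.length_cons]
      omega
  obtain ⟨p, hp⟩ := huv.exists_walk_length_eq_dist
  exact hp ▸ walk_bound p

lemma length_eq_dist_of_isPath (hG : G.IsAcyclic) {u v : V} {p : G.Walk u v} (hp : p.IsPath) :
    p.length = G.dist u v := by
  obtain ⟨q, hq, hlen⟩ := p.reachable.exists_path_of_dist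
  have hpq : (⟨p, hp⟩ : G.Path u v) = ⟨q, hq⟩ := (hG.subsingleton_path u v).elim _ _
  rw [← hlen, Subtype.mk.inj hpq]

lemma dist_map_of_injective (hG : G.IsAcyclic) {f : H →g G} (hf : Function.Injective f) {a b : W}
    (hab : H.Reachable a b) : G.dist (f a) (f b) = H.dist a b := by
  obtain ⟨p, hp, hlen⟩ := hab.exists_path_of_dist
  rw [← length_eq_dist_of_isPath hG (hp.map hf), Walk.length_map, hlen]

lemma isLeaf_of_forall_dist_le (hG : G.IsTree) {c x : V} (hxc : x ≠ c)
    (hx : ∀ w, G.dist c w ≤ G.dist c x) : IsLeaf G x := by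
  obtain ⟨p, hp, hlen⟩ := hG.connected.exists_path_of_dist c x
  refine Set.ncard_eq_one.2 ⟨p.penultimate, Set.ext fun w => ⟨fun hxw => ?_, ?_⟩⟩
  · have hadj : G.Adj x w := hxw
    refine hG.isAcyclic.eq_penultimate_of_adj_end hp hadj ?_
    by_contra hwp
    have hdist := length_eq_dist_of_isPath hG.isAcyclic (hp.concat hwp hadj)
    rw [Walk.length_concat] at hdist
    have := hx w
    omega
  · rintro rfl
    exact (p.adj_penultimate (Walk.not_nil_of_ne hxc.symm)).symm

end Distance

section Branch

variable {V : Type*} {T : SimpleGraph V}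

/-- The unique path from `c` to `v` in a tree. -/
noncomputable def treePath (hT : T.IsTree) (c v : V) : T.Walk c v :=
  (hT.existsUnique_path c v).choose

/-- The branch at `c` containing `v`, named by the neighbour of `c` through which the path from `c`
to `v` starts. For `v = c` the value is `c` itself. -/
noncomputable def branch (hT : T.IsTree) (c v : V) : V :=
  (treePath hT c v).snd

lemma isPath_treePath (hT : T.IsTree) (c v : V) : (treePath hT c v).IsPath :=
  (hT.existsUnique_path c v).choose_spec.1

lemma length_treePath (hT : T.IsTree) (c v : V) : (treePath hT c v).length = T.dist c v :=
  length_eq_dist_of_isPath hT.isAcyclic (isPath_treePath hT c v)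

lemma eq_treePath (hT : T.IsTree) {c v : V} {p : T.Walk c v} (hp : p.IsPath) :
    p = treePath hT c v :=
  (hT.existsUnique_path c v).choose_spec.2 p hp

lemma branch_eq_of_mem_support (hT : T.IsTree) {c v z : V} (hzc : z ≠ c)
    (hz : z ∈ (treePath hT c v).support) : branch hT c z = branch hT c v := by
  classical
  rw [branch, ← eq_treePath hT ((isPath_treePath hT c v).takeUntil hz), Walk.snd_takeUntil hzc]
  rfl

lemma dist_getVert_treePath (hT : T.IsTree) {c x : V} {j : ℕ} (hj : j ≤ T.dist c x) :
    T.dist c ((treePath hT c x).getVert j) = j := by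
  rw [← length_eq_dist_of_isPath hT.isAcyclic ((isPath_treePath hT c x).take j), Walk.take_length,
    length_treePath, min_eq_left hj]

lemma branch_getVert_treePath (hT : T.IsTree) {c x : V} {j : ℕ} (hj : j ≤ T.dist c x)
    (hpos : 0 < j) : branch hT c ((treePath hT c x).getVert j) = branch hT c x := by
  refine branch_eq_of_mem_support hT (fun hc => ?_) (Walk.getVert_mem_support _ _)
  have := dist_getVert_treePath hT hj
  rw [hc, dist_self] at this
  omega

lemma dist_eq_add_of_branch_ne (hT : T.IsTree) {c x y : V} (h : branch hT c x ≠ branch hT c y) :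
    T.dist x y = T.dist c x + T.dist c y := by
  have hpx := isPath_treePath hT c x
  have hpy := isPath_treePath hT c y
  have hdisj : (treePath hT c x).reverse.support.Disjoint (treePath hT c y).support.tail := by
    intro z hzx hzy
    rw [Walk.support_reverse, List.mem_reverse] at hzx
    have hzc : z ≠ c := by
      rintro rfl
      have hnodup := hpy.support_nodup
      rw [← Walk.cons_tail_support] at hnodup
      exact (List.nodup_cons.1 hnodup).1 hzy
    exact h ((branch_eq_of_mem_support hT hzc hzx).symm.trans
      (branch_eq_of_mem_support hT hzc (List.mem_of_mem_tail hzy)))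
  have hpath : ((treePath hT c x).reverse.append (treePath hT c y)).IsPath := by
    rw [Walk.isPath_def, Walk.support_append, List.nodup_append']
    exact ⟨hpx.reverse.support_nodup, hpy.support_nodup.tail, hdisj⟩
  rw [← length_eq_dist_of_isPath hT.isAcyclic hpath, Walk.length_append, Walk.length_reverse,
    length_treePath, length_treePath]

lemma dist_branch_add_one_le (hT : T.IsTree) {c x : V} (hx : x ≠ c) :
    T.dist x (branch hT c x) + 1 ≤ T.dist c x := by
  rw [dist_comm, ← length_treePath hT c x,
    ← Walk.length_tail_add_one (Walk.not_nil_of_ne hx.symm)]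
  exact Nat.succ_le_succ (dist_le _)

lemma dist_add_two_le_of_branch_eq (hT : T.IsTree) {c x y : V} (hx : x ≠ c) (hy : y ≠ c)
    (h : branch hT c x = branch hT c y) : T.dist x y + 2 ≤ T.dist c x + T.dist c y := by
  have hxb := dist_branch_add_one_le hT hx
  have hyb := dist_branch_add_one_le hT hy
  have htri := hT.connected.dist_triangle (u := x) (v := branch hT c x) (w := y)
  rw [← h, dist_comm] at hyb
  omega

end Branch

section Center

variable {V : Type*} [Fintype V] {T : SimpleGraph V}

/-- The vertices at distance exactly `r` from `c`. -/
noncomputable def distSphere (T : SimpleGraph V) (c : V) (r : ℕ) : Finset V :=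
  {v | T.dist c v = r}

lemma mem_distSphere {c v : V} {r : ℕ} : v ∈ distSphere T c r ↔ T.dist c v = r := by
  simp [distSphere]

lemma ne_of_mem_distSphere {c v : V} {r : ℕ} (hr : 0 < r) (hv : v ∈ distSphere T c r) : v ≠ c := by
  rintro rfl
  rw [mem_distSphere, dist_self] at hv
  omega

lemma exists_center (hT : T.IsTree) {m : ℕ} (hm : 0 < m) (hdiam : gdiam T = 2 * m) :
    ∃ c, (∀ w, T.dist c w ≤ m) ∧ (branch hT c '' distSphere T c m).Nontrivial := by
  have := hT.connected.nonempty
  have dist_le_two_mul u v : T.dist u v ≤ 2 * m :=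
    hdiam ▸ (dist_le_ecc u v).trans (ecc_le_gdiam u)
  obtain ⟨u, v, huv⟩ := exists_dist_eq_gdiam (G := T)
  obtain ⟨c, huc, hcv⟩ := exists_dist_eq_of_dist_eq_add hT.connected
    (huv.trans (hdiam.trans (two_mul m)))
  rw [dist_comm] at huc
  have hu : u ∈ distSphere T c m := mem_distSphere.2 huc
  have hv : v ∈ distSphere T c m := mem_distSphere.2 hcv
  have hbranch : branch hT c u ≠ branch hT c v := by
    intro h
    have := dist_add_two_le_of_branch_eq hT (ne_of_mem_distSphere hm hu)
      (ne_of_mem_distSphere hm hv) h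
    omega
  refine ⟨c, fun w => ?_, _, Set.mem_image_of_mem _ hu, _, Set.mem_image_of_mem _ hv, hbranch⟩
  -- `w` lies outside the branch of `u` or outside that of `v`, so `2 * m` bounds `T.dist c w + m`.
  by_cases hwu : branch hT c w = branch hT c u
  · have := dist_eq_add_of_branch_ne hT (hwu ▸ hbranch)
    have := dist_le_two_mul w v
    omega
  · have := dist_eq_add_of_branch_ne hT hwu
    have := dist_le_two_mul w u
    omega

lemma isFarMultipartition_branch (hT : T.IsTree) {c : V} {k m : ℕ} (hkm : k + 1 = 2 * m)
    (hc : ∀ w, T.dist c w ≤ m) :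
    IsFarMultipartition T k (distSphere T c m) (branch hT c) := by
  intro u v
  simp only [mem_coe]
  constructor
  · intro hfar
    have htri := hT.connected.dist_triangle (u := u) (v := c) (w := v)
    rw [dist_comm (u := u) (v := c)] at htri
    have hu : T.dist c u = m := by linarith [hc u, hc v]
    have hv : T.dist c v = m := by linarith [hc u, hc v]
    rw [← mem_distSphere] at hu hv
    refine ⟨hu, hv, fun hbranch => ?_⟩
    have hm : 0 < m := by omega
    have := dist_add_two_le_of_branch_eq hT (ne_of_mem_distSphere hm hu)
      (ne_of_mem_distSphere hm hv) hbranch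
    rw [mem_distSphere] at hu hv
    omega
  · rintro ⟨hu, hv, hbranch⟩
    rw [mem_distSphere] at hu hv
    rw [dist_eq_add_of_branch_ne hT hbranch]
    omega

lemma isLeaf_of_mem_distSphere (hT : T.IsTree) {c x : V} {m : ℕ} (hm : 0 < m)
    (hc : ∀ w, T.dist c w ≤ m) (hx : x ∈ distSphere T c m) : IsLeaf T x :=
  isLeaf_of_forall_dist_le hT (ne_of_mem_distSphere hm hx) (by rwa [mem_distSphere.1 hx])

end Center

section Spider

variable {p m : ℕ}

lemma spider_reachable_none (x : Option (Fin p × Fin m)) : (spider p m).Reachable none x := by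
  rcases x with _ | ⟨i, j, hj⟩
  · rfl
  induction j with
  | zero => exact Adj.reachable (by simp [spider])
  | succ j ih => exact (ih (by omega)).trans (Adj.reachable (by simp [spider]))

lemma depth_add_depth_le_dist_spider {i i' : Fin p} (hi : i ≠ i') (j j' : Fin m) :
    (j + 1 : ℕ) + (j' + 1) ≤ (spider p m).dist (some (i, j)) (some (i', j')) := by
  -- Fold the spider onto a line, the leg `i` going left and all other legs going right.
  let position : Option (Fin p × Fin m) → ℤ
    | none => 0
    | some (a, t) => if a = i then -(t + 1) else t + 1
  have step x y (hxy : (spider p m).Adj x y) : position y ≤ position x + 1 := by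
    rcases x with _ | ⟨a, t⟩ <;> rcases y with _ | ⟨a', t'⟩ <;>
      simp only [spider, fromRel_adj] at hxy <;> grind
  have := sub_le_dist step <|
    (spider_reachable_none (some (i, j))).symm.trans (spider_reachable_none (some (i', j')))
  simp only [position, if_pos, if_neg hi.symm] at this
  omega

lemma exists_pairwise_dist_of_containsSub_spider {V : Type*} {T : SimpleGraph V} (hT : T.IsAcyclic)
    (hm : 0 < m) (h : ContainsSub T (spider p m)) :
    ∃ x : Fin p → V, Pairwise fun i j => 2 * m ≤ T.dist (x i) (x j) := by
  obtain ⟨f, hf, hadj⟩ := h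
  let φ : spider p m →g T := ⟨f, hadj _ _⟩
  let tip (i : Fin p) : Option (Fin p × Fin m) := some (i, ⟨m - 1, by omega⟩)
  refine ⟨fun i => φ (tip i), fun i j hij => ?_⟩
  have hreach : (spider p m).Reachable (tip i) (tip j) :=
    (spider_reachable_none _).symm.trans (spider_reachable_none _)
  have htips : m - 1 + 1 + (m - 1 + 1) ≤ (spider p m).dist (tip i) (tip j) :=
    depth_add_depth_le_dist_spider hij ⟨m - 1, by omega⟩ ⟨m - 1, by omega⟩
  beta_reduce
  rw [dist_map_of_injective hT (f := φ) hf hreach]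
  omega

lemma containsSub_spider_of_legs {V : Type*} {G : SimpleGraph V} {c : V} {leg : Fin p → ℕ → V}
    (hzero : ∀ i, leg i 0 = c) (hadj : ∀ i, ∀ t < m, G.Adj (leg i t) (leg i (t + 1)))
    (hne : ∀ i (j : Fin m), leg i (j + 1) ≠ c)
    (hinj : ∀ i i' (j j' : Fin m), leg i (j + 1) = leg i' (j' + 1) → i = i' ∧ j = j') :
    ContainsSub G (spider p m) := by
  let f : Option (Fin p × Fin m) → V
    | none => c
    | some (i, j) => leg i (j + 1)
  refine ⟨f, ?_, ?_⟩
  · rintro (_ | ⟨i, j⟩) (_ | ⟨i', j'⟩) h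
    · rfl
    · exact absurd h.symm (hne i' j')
    · exact absurd h (hne i j)
    · obtain ⟨rfl, rfl⟩ := hinj i i' j j' h
      rfl
  · have adj_center i (j : Fin m) (hj : (j : ℕ) = 0) : G.Adj c (leg i (j + 1)) := by
      rw [hj, ← hzero i]
      exact hadj i 0 (hj ▸ j.isLt)
    have adj_leg i i' (j j' : Fin m) (h : i = i' ∧ (j : ℕ) + 1 = j') :
        G.Adj (leg i (j + 1)) (leg i' (j' + 1)) := by
      obtain ⟨rfl, hj⟩ := h
      rw [hj]
      exact hadj i j' j'.isLt
    rintro (_ | ⟨i, j⟩) (_ | ⟨i', j'⟩) h <;> simp only [spider, fromRel_adj] at h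
    · tauto
    · exact adj_center i' j' (h.2.resolve_right id)
    · exact (adj_center i j (h.2.resolve_left id)).symm
    · exact h.2.elim (adj_leg i i' j j') fun h => (adj_leg i' i j' j h).symm

lemma containsSub_spider_of_branches {V : Type*} {T : SimpleGraph V} (hT : T.IsTree) {c : V}
    {x : Fin p → V} (hx : ∀ i, T.dist c (x i) = m)
    (hbranch : Function.Injective fun i => branch hT c (x i)) : ContainsSub T (spider p m) := by
  let leg (i : Fin p) : ℕ → V := (treePath hT c (x i)).getVert
  have dist_leg i (j : Fin m) : T.dist c (leg i (j + 1)) = j + 1 :=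
    dist_getVert_treePath hT (by rw [hx]; omega)
  have branch_leg i (j : Fin m) : branch hT c (leg i (j + 1)) = branch hT c (x i) :=
    branch_getVert_treePath hT (by rw [hx]; omega) j.val.succ_pos
  refine containsSub_spider_of_legs (leg := leg) (fun i => Walk.getVert_zero _)
    (fun i t ht => Walk.adj_getVert_succ _ (by rwa [length_treePath, hx])) ?_ ?_
  · intro i j h
    have hj := dist_leg i j
    rw [h, dist_self] at hj
    omega
  · intro i i' j j' h
    have hj := dist_leg i j
    have hi := branch_leg i j
    rw [h, dist_leg] at hj
    rw [h, branch_leg] at hi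
    exact ⟨(hbranch hi).symm, Fin.ext (by omega)⟩

lemma containsSub_spider_of_le_card_image_branch {V : Type*} [Fintype V] [DecidableEq V]
    {T : SimpleGraph V} (hT : T.IsTree) {c : V}
    (hp : p ≤ #((distSphere T c m).image (branch hT c))) : ContainsSub T (spider p m) := by
  obtain ⟨e⟩ : Nonempty (Fin p ↪ (distSphere T c m).image (branch hT c)) :=
    Function.Embedding.nonempty_of_card_le (by rwa [Fintype.card_fin, Fintype.card_coe])
  choose x hx hxe using fun i => mem_image.1 (e i).2
  refine containsSub_spider_of_branches hT (fun i => mem_distSphere.1 (hx i)) fun i j hij => ?_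
  exact e.injective (Subtype.ext ((hxe i).symm.trans (hij.trans (hxe j))))

lemma card_image_branch_mul_add_one_le {V : Type*} [Fintype V] [DecidableEq V] {T : SimpleGraph V}
    (hT : T.IsTree) {c : V} :
    #((distSphere T c m).image (branch hT c)) * m + 1 ≤ Fintype.card V := by
  obtain ⟨f, hf, -⟩ := containsSub_spider_of_le_card_image_branch hT (c := c) (m := m) le_rfl
  simpa using Fintype.card_le_of_injective f hf

lemma containsSub_spider_iff {V : Type*} [Fintype V] [DecidableEq V] {T : SimpleGraph V}
    (hT : T.IsTree) {c : V} (hm : 0 < m) (hc : ∀ w, T.dist c w ≤ m) (hp : 2 ≤ p) :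
    ContainsSub T (spider p m) ↔ p ≤ #((distSphere T c m).image (branch hT c)) := by
  constructor
  · intro h
    obtain ⟨x, hx⟩ := exists_pairwise_dist_of_containsSub_spider hT.isAcyclic hm h
    have hkm : 2 * m - 1 + 1 = 2 * m := by omega
    have : Nontrivial (Fin p) := Fin.nontrivial_iff_two_le.2 hp
    rw [← Fintype.card_fin p]
    exact (isFarMultipartition_branch hT hkm hc).card_le_card_image (hkm.symm ▸ hx)
  · exact containsSub_spider_of_le_card_image_branch hT

end Spider

lemma fk_add_eq {k p r : ℕ} (hk : Odd k) (hp : 2 ≤ p) (hr : r ≤ k / 2) :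
    fk k (p * (k / 2 + 1) + r + 1) + p = p * (k / 2 + 1) + r + 1 + 1 := by
  have hk_mod : k % 2 = 1 := Nat.odd_iff.1 hk
  have htwo : 2 * (k / 2 + 1) ≤ p * (k / 2 + 1) := Nat.mul_le_mul_right _ hp
  have hp_le : p ≤ p * (k / 2 + 1) := Nat.le_mul_of_pos_right p (k / 2).succ_pos
  have hdiv : (p * (k / 2 + 1) + r) / (k / 2 + 1) = p := by
    rw [add_comm, Nat.add_mul_div_right _ _ (k / 2).succ_pos, Nat.div_eq_of_lt (by omega), zero_add]
  rw [fk, if_neg (by omega), hk_mod, Nat.add_sub_cancel, hdiv]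
  omega

end DistanceIndependence

open Finset DistanceIndependence

/-- Let `k ≥ 3` be odd and let `T` be a tree on `n` vertices of diameter
`k + 1`, where `n = p(⌊k/2⌋+1) + r + 1` with `p ≥ 2`, `0 ≤ r ≤ ⌊k/2⌋`. Then
`mdi_k(T) ≥ f_k(n)`, with equality iff `T` contains a subtree isomorphic to
`S_{p,⌊k/2⌋+1}` and `T` contains no `k`-special pair. -/
theorem stmt_15 (k : ℕ) (hk : 3 ≤ k) (hodd : Odd k) (p r : ℕ) (hp : 2 ≤ p)
    (hr : r ≤ k / 2) {V : Type} [Fintype V] {n : ℕ} (hn : Fintype.card V = n)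
    (hnval : n = p * (k / 2 + 1) + r + 1)
    (T : SimpleGraph V) (hT : T.IsTree) (hdiam : gdiam T = k + 1) :
    fk k n ≤ mdi T k ∧
    (mdi T k = fk k n ↔
      ContainsSub T (spider p (k / 2 + 1)) ∧ ∀ x y, ¬ KSpecial T k x y) := by
  classical
  subst hn
  have hm : 0 < k / 2 + 1 := (k / 2).succ_pos
  have hkm : k + 1 = 2 * (k / 2 + 1) := by have := Nat.odd_iff.1 hodd; omega
  obtain ⟨c, hc, hbranches⟩ := exists_center hT hm (hdiam.trans hkm)
  have hfar := isFarMultipartition_branch hT hkm hc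
  have hsphere : (distSphere T c (k / 2 + 1)).Nonempty := by simpa using hbranches.nonempty
  have hle := hfar.card_add_one_le_mdi_add_card_image hsphere
  have hfk : fk k (Fintype.card V) + p = Fintype.card V + 1 := hnval ▸ fk_add_eq hodd hp hr
  have hbranches_le : #((distSphere T c (k / 2 + 1)).image (branch hT c)) ≤ p := by
    have := card_image_branch_mul_add_one_le hT (c := c) (m := k / 2 + 1)
    exact Nat.le_of_lt_succ (Nat.lt_of_mul_lt_mul_right (a := k / 2 + 1) (by linarith))
  rw [containsSub_spider_iff hT hm hc hp, hfar.forall_not_kSpecial_iff hbranches hdiam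
    fun x hx => isLeaf_of_mem_distSphere hT hm hc hx, ← hfar.mdi_add_card_image_eq_iff hsphere]
  omega
end

section
/- Let k ≥ 3 be odd and let n ≥ k + 2 be such that ⌊k/2⌋ + 1 divides n − 1, and set p = (n−1)/(⌊k/2⌋+1). Then an n-vertex tree T satisfies mdi_k(T) = f_k(n) if and only if T is isomorphic to S_{p,⌊k/2⌋+1}; in particular, up to isomorphism there is a unique n-vertex tree with the minimum possible number of maximal distance-k independent sets among all n-vertex trees. -/
/-!
The `k`-MDISs of a tree `T` are the maximal independent sets of its `k`-th power, which is chordal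
by the four-point condition. Removing simplicial vertices one at a time shows that a chordal graph
on `n` vertices has at least `n + 1 - c` maximal independent sets, where `c` is the number of
simplicial cliques (closed neighbourhoods of simplicial vertices). Indeed, deleting a simplicial
vertex `x` destroys the simplicial clique of `x` and creates at most one new one; a clique that
becomes simplicial was avoided by some maximal independent set, so its creation costs a maximal
independent set.

Now let `k = 2 * t + 1` and `n = p * (t + 1) + 1`. If `T` has at most `p * t + 2` `k`-MDISs, then
its `k`-th power has at least `p` simplicial cliques. Their simplicial vertices are pairwise at
distance at least `2 * (t + 1)` in `T`, so that the initial segments with `t + 1` edges of `p`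
geodesics issuing from them can meet only at their ends. They have no room to do so in more than one
point, hence they form a spanning spider.
-/

open SimpleGraph

section Chordal

variable {V W : Type*} {G : SimpleGraph V} {H : SimpleGraph W}

/-- The maximal independent sets of `G`. -/
def maximalIndepSets (G : SimpleGraph V) : Set (Set V) :=
  {J | Maximal G.IsIndepSet J}

/-- A simplicial clique: a clique that is the closed neighbourhood of one of its vertices (which is
then a simplicial vertex). For a clique `D` containing `v`, the closed neighbourhood of `v` is `D`
as soon as `G.neighborSet v ⊆ D`. -/
def IsSimplicialClique (G : SimpleGraph V) (D : Set V) : Prop :=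
  G.IsClique D ∧ ∃ v ∈ D, G.neighborSet v ⊆ D

/-- The simplicial cliques of `G`. -/
def simplicialCliques (G : SimpleGraph V) : Set (Set V) :=
  {D | IsSimplicialClique G D}

/-- Chordality, in the form of Dirac's criterion: every nonempty induced subgraph has a simplicial
vertex. For finite graphs this is equivalent to the absence of induced cycles of length at least
four. -/
def IsChordal (G : SimpleGraph V) : Prop :=
  ∀ s : Set V, s.Nonempty → ∃ v ∈ s, G.IsClique (G.neighborSet v ∩ s)

lemma isIndepSet_image_iff (f : G ↪g H) {s : Set V} : H.IsIndepSet (f '' s) ↔ G.IsIndepSet s := by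
  rw [IsIndepSet, f.injective.injOn.pairwise_image]
  simp only [IsIndepSet, Set.Pairwise, Function.onFun, f.map_adj_iff]

lemma isClique_image_iff (f : G ↪g H) {s : Set V} : H.IsClique (f '' s) ↔ G.IsClique s := by
  rw [IsClique, f.injective.injOn.pairwise_image]
  simp only [IsClique, Set.Pairwise, Function.onFun, f.map_adj_iff]

lemma exists_mem_maximalIndepSets_superset [Finite V] {A : Set V} (hA : G.IsIndepSet A) :
    ∃ J ∈ maximalIndepSets G, A ⊆ J := by
  obtain ⟨J, hAJ, hJ⟩ := Finite.exists_le_maximal hA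
  exact ⟨J, hJ, hAJ⟩

lemma exists_adj_of_mem_maximalIndepSets {J : Set V} (hJ : J ∈ maximalIndepSets G) {v : V}
    (hv : v ∉ J) : ∃ u ∈ J, G.Adj v u := by
  by_contra! hno
  have hins : G.IsIndepSet (insert v J) :=
    hJ.prop.insert fun u hu _ => ⟨hno u hu, fun h => hno u hu h.symm⟩
  exact hv (hJ.le_of_ge hins (Set.subset_insert v J) (Set.mem_insert v J))

lemma maximalIndepSets_subset_image_preimage [Finite W] (f : G ↪g H) :
    maximalIndepSets G ⊆ (f ⁻¹' ·) '' maximalIndepSets H := by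
  intro K hK
  obtain ⟨J, hJ, hKJ⟩ :=
    exists_mem_maximalIndepSets_superset ((isIndepSet_image_iff f).2 hK.prop)
  have hind : G.IsIndepSet (f ⁻¹' J) :=
    (isIndepSet_image_iff f).1 (hJ.prop.mono (Set.image_preimage_subset f J))
  exact ⟨J, hJ, (hK.eq_of_le hind (Set.image_subset_iff.1 hKJ)).symm⟩

lemma ncard_maximalIndepSets_le [Finite W] (f : G ↪g H) :
    (maximalIndepSets G).ncard ≤ (maximalIndepSets H).ncard :=
  (Set.ncard_le_ncard (maximalIndepSets_subset_image_preimage f)).trans Set.ncard_image_le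

lemma ncard_maximalIndepSets_lt [Finite W] (f : G ↪g H) {J : Set W}
    (hJ : J ∈ maximalIndepSets H) (hJG : f ⁻¹' J ∉ maximalIndepSets G) :
    (maximalIndepSets G).ncard < (maximalIndepSets H).ncard := by
  have hsub := Set.insert_subset (Set.mem_image_of_mem (f ⁻¹' ·) hJ)
    (maximalIndepSets_subset_image_preimage f)
  have : Finite V := Finite.of_injective f f.injective
  calc (maximalIndepSets G).ncard
      < (insert (f ⁻¹' J) (maximalIndepSets G)).ncard := by
        rw [Set.ncard_insert_of_notMem hJG]; exact Nat.lt_succ_self _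
    _ ≤ ((f ⁻¹' ·) '' maximalIndepSets H).ncard := Set.ncard_le_ncard hsub
    _ ≤ (maximalIndepSets H).ncard := Set.ncard_image_le

lemma ncard_maximalIndepSets_congr [Finite V] (e : G ≃g H) :
    (maximalIndepSets G).ncard = (maximalIndepSets H).ncard :=
  have : Finite W := Finite.of_equiv V e.toEquiv
  (ncard_maximalIndepSets_le e.toEmbedding).antisymm (ncard_maximalIndepSets_le e.symm.toEmbedding)

-- The maximal independent sets of a complete split graph with independent part `L`
-- are `L` and the singletons outside `L`.
lemma ncard_maximalIndepSets_of_adj_iff [Finite V] {L : Set V} (hL : L.Nonempty)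
    (hG : ∀ u v, G.Adj u v ↔ u ≠ v ∧ ¬(u ∈ L ∧ v ∈ L)) :
    (maximalIndepSets G).ncard = Lᶜ.ncard + 1 := by
  have hLmem : L ∈ maximalIndepSets G := by
    refine ⟨fun u hu v hv _ h => ((hG u v).1 h).2 ⟨hu, hv⟩, fun J hJ hLJ v hv => ?_⟩
    by_contra hvL
    obtain ⟨u, hu⟩ := hL
    have huv : u ≠ v := fun h => hvL (h ▸ hu)
    exact hJ (hLJ hu) hv huv ((hG u v).2 ⟨huv, fun h => hvL h.2⟩)
  have heq : maximalIndepSets G = insert L ((fun v => {v}) '' Lᶜ) := by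
    ext J
    refine ⟨fun hJ => ?_, ?_⟩
    · by_cases hJL : J ⊆ L
      · exact Or.inl (hJ.eq_of_le hLmem.prop hJL)
      · obtain ⟨v, hvJ, hvL⟩ := Set.not_subset.1 hJL
        refine Or.inr ⟨v, hvL, (Set.eq_singleton_iff_unique_mem.2 ⟨hvJ, fun u hu => ?_⟩).symm⟩
        by_contra huv
        exact hJ.prop hu hvJ huv ((hG u v).2 ⟨huv, fun h => hvL h.2⟩)
    · rintro (rfl | ⟨v, hv, rfl⟩)
      · exact hLmem
      · refine ⟨Set.pairwise_singleton _ _, fun J hJ hvJ u hu => ?_⟩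
        by_contra huv
        exact hJ hu (hvJ rfl) huv ((hG u v).2 ⟨huv, fun h => hv h.2⟩)
  have hnotMem : L ∉ (fun v => ({v} : Set V)) '' Lᶜ := by
    rintro ⟨v, hv, rfl⟩
    exact hv rfl
  rw [heq, Set.ncard_insert_of_notMem hnotMem,
    Set.ncard_image_of_injective _ Set.singleton_injective]

lemma subset_of_isClique_of_neighborSet_subset {D E : Set V} (hD : G.IsClique D) {v : V}
    (hvD : v ∈ D) (hvE : v ∈ E) (hE : G.neighborSet v ⊆ E) : D ⊆ E := by
  intro u hu
  rcases eq_or_ne v u with rfl | hne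
  · exact hvE
  · exact hE (hD hvD hu hne)

lemma eq_of_isClique_of_neighborSet_subset {D E : Set V} (hD : G.IsClique D) (hE : G.IsClique E)
    {v w : V} (hv : v ∈ D) (hw : w ∈ E) (hvD : G.neighborSet v ⊆ D) (hwE : G.neighborSet w ⊆ E)
    (hvw : v ≠ w → G.Adj v w) : D = E := by
  have hwD : w ∈ D := by
    rcases eq_or_ne v w with rfl | hne
    · exact hv
    · exact hvD (hvw hne)
  have hDE := subset_of_isClique_of_neighborSet_subset hD hwD hw hwE
  exact hDE.antisymm (subset_of_isClique_of_neighborSet_subset hE (hDE hv) hv hvD)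

lemma isSimplicialClique_insert_neighborSet {x : V} (hx : G.IsClique (G.neighborSet x)) :
    IsSimplicialClique G (insert x (G.neighborSet x)) :=
  ⟨hx.insert fun _ hu _ => hu, x, Set.mem_insert _ _, Set.subset_insert _ _⟩

lemma exists_far_of_le_ncard_simplicialCliques [Finite V] {p : ℕ}
    (hp : p ≤ (simplicialCliques G).ncard) :
    ∃ x : Fin p → V, ∀ i j, i ≠ j → x i ≠ x j ∧ ¬G.Adj (x i) (x j) := by
  obtain ⟨D⟩ : Nonempty (Fin p ↪ simplicialCliques G) :=
    have := Fintype.ofFinite (simplicialCliques G)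
    Function.Embedding.nonempty_of_card_le <| by
      rwa [Fintype.card_fin, ← Nat.card_eq_fintype_card, Nat.card_coe_set_eq]
  choose x hxD hx using fun i => (D i).2.2
  refine ⟨x, fun i j hij => ?_⟩
  by_contra! hadj
  exact hij (D.injective (Subtype.ext (eq_of_isClique_of_neighborSet_subset (D i).2.1 (D j).2.1
    (hxD i) (hxD j) (hx i) (hx j) hadj)))

lemma IsSimplicialClique.nonempty_inter {D J : Set V} (hD : IsSimplicialClique G D)
    (hJ : J ∈ maximalIndepSets G) : (J ∩ D).Nonempty := by
  obtain ⟨-, v, hvD, hv⟩ := hD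
  by_cases hvJ : v ∈ J
  · exact ⟨v, hvJ, hvD⟩
  · obtain ⟨u, huJ, hu⟩ := exists_adj_of_mem_maximalIndepSets hJ hvJ
    exact ⟨u, huJ, hv hu⟩

namespace IsChordal

lemma comap (hH : IsChordal H) (f : G ↪g H) : IsChordal G := by
  intro s hs
  obtain ⟨_, ⟨v, hv, rfl⟩, hclique⟩ := hH (f '' s) (hs.image f)
  refine ⟨v, hv, (isClique_image_iff f).1 (hclique.subset ?_)⟩
  rintro _ ⟨u, ⟨hvu, hu⟩, rfl⟩
  exact ⟨f.map_adj_iff.2 hvu, u, hu, rfl⟩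

lemma adj_or_adj (hG : IsChordal G) {a b c d : V} (hab : G.Adj a b) (hbc : G.Adj b c)
    (hcd : G.Adj c d) (hda : G.Adj d a) (hac : a ≠ c) (hbd : b ≠ d) : G.Adj a c ∨ G.Adj b d := by
  obtain ⟨v, hv, hclique⟩ := hG {a, b, c, d} (Set.insert_nonempty _ _)
  rcases hv with rfl | rfl | rfl | rfl
  · exact Or.inr (hclique ⟨hab, by simp⟩ ⟨hda.symm, by simp⟩ hbd)
  · exact Or.inl (hclique ⟨hab.symm, by simp⟩ ⟨hbc, by simp⟩ hac)
  · exact Or.inr (hclique ⟨hbc.symm, by simp⟩ ⟨hcd, by simp⟩ hbd)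
  · exact Or.inl (hclique ⟨hda, by simp⟩ ⟨hcd.symm, by simp⟩ hac)

-- Among the independent sets avoiding `D`, one that dominates a maximal part of `D` dominates all
-- of `D`: otherwise exchange the neighbours of some outside neighbour `z` of an undominated vertex
-- for `z`; the absence of induced 4-cycles keeps every vertex dominated before.
lemma exists_isIndepSet_dominating [Finite V] (hG : IsChordal G) {D : Set V} (hD : G.IsClique D)
    (hout : ∀ u ∈ D, ∃ z ∉ D, G.Adj u z) :
    ∃ A, G.IsIndepSet A ∧ ∀ u ∈ D, ∃ a ∈ A, G.Adj u a := by
  let dominated (A : Set V) : Set V := {u ∈ D | ∃ a ∈ A, G.Adj u a}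
  obtain ⟨A, ⟨hA, hAD⟩, hmax⟩ := Set.Finite.exists_maximalFor dominated
    {A | G.IsIndepSet A ∧ Disjoint A D} (Set.toFinite _) ⟨∅, Set.pairwise_empty _, by simp⟩
  refine ⟨A, hA, ?_⟩
  by_contra! ⟨u, hu, hundom⟩
  obtain ⟨z, hz, huz⟩ := hout u hu
  have hB : G.IsIndepSet (insert z {a ∈ A | ¬G.Adj z a}) :=
    (hA.mono (Set.sep_subset _ _)).insert fun a ha _ => ⟨ha.2, fun h => ha.2 h.symm⟩
  have hBD : Disjoint (insert z {a ∈ A | ¬G.Adj z a}) D :=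
    Set.disjoint_insert_left.2 ⟨hz, hAD.mono_left (Set.sep_subset _ _)⟩
  have hle : dominated A ⊆ dominated (insert z {a ∈ A | ¬G.Adj z a}) := by
    rintro v ⟨hv, a, ha, hva⟩
    refine ⟨hv, ?_⟩
    by_cases hza : G.Adj z a
    · have hvu : v ≠ u := by rintro rfl; exact hundom a ha hva
      have hvz : v ≠ z := by rintro rfl; exact hz hv
      have hau : a ≠ u := by rintro rfl; exact hAD.notMem_of_mem_left ha hu
      have := hG.adj_or_adj hva hza.symm huz.symm (hD hu hv hvu.symm) hvz hau
      exact ⟨z, Set.mem_insert _ _, this.resolve_right fun h => hundom a ha h.symm⟩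
    · exact ⟨a, Set.mem_insert_of_mem _ ⟨ha, hza⟩, hva⟩
  obtain ⟨-, a, ha, hua⟩ := hmax ⟨hB, hBD⟩ hle ⟨hu, z, Set.mem_insert _ _, huz⟩
  exact hundom a ha hua

lemma exists_mem_maximalIndepSets_disjoint [Finite V] (hG : IsChordal G) {D : Set V}
    (hD : G.IsClique D) (hDs : ¬IsSimplicialClique G D) :
    ∃ J ∈ maximalIndepSets G, Disjoint J D := by
  have hout : ∀ u ∈ D, ∃ z ∉ D, G.Adj u z := by
    intro u hu
    by_contra! hno
    exact hDs ⟨hD, u, hu, fun z huz => by_contra fun hz => hno z hz huz⟩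
  obtain ⟨A, hA, hdom⟩ := hG.exists_isIndepSet_dominating hD hout
  obtain ⟨J, hJ, hAJ⟩ := exists_mem_maximalIndepSets_superset hA
  refine ⟨J, hJ, Set.disjoint_right.2 fun u hu huJ => ?_⟩
  obtain ⟨a, ha, hua⟩ := hdom u hu
  exact hJ.prop huJ (hAJ ha) hua.ne hua

lemma ncard_maximalIndepSets_lt_of_image_notMem [Finite W] (hH : IsChordal H) (f : G ↪g H)
    {D : Set V} (hD : IsSimplicialClique G D) (hDH : ¬IsSimplicialClique H (f '' D)) :
    (maximalIndepSets G).ncard < (maximalIndepSets H).ncard := by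
  obtain ⟨J, hJ, hJD⟩ :=
    hH.exists_mem_maximalIndepSets_disjoint ((isClique_image_iff f).2 hD.1) hDH
  refine ncard_maximalIndepSets_lt f hJ fun hJG => ?_
  obtain ⟨u, huJ, huD⟩ := hD.nonempty_inter hJG
  exact hJD.notMem_of_mem_left huJ (Set.mem_image_of_mem f huD)

lemma exists_isClique_neighborSet [Nonempty V] (hG : IsChordal G) :
    ∃ x, G.IsClique (G.neighborSet x) := by
  obtain ⟨x, -, hx⟩ := hG Set.univ Set.univ_nonempty
  exact ⟨x, by rwa [Set.inter_univ] at hx⟩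

end IsChordal

section Deletion

variable {x : V} {D : Set ↥({x}ᶜ : Set V)}

lemma isSimplicialClique_image_of_not_adj (hD : (G.induce {x}ᶜ).IsClique D) {v : ↥({x}ᶜ : Set V)}
    (hvD : v ∈ D) (hv : (G.induce {x}ᶜ).neighborSet v ⊆ D) (hvx : ¬G.Adj x v) :
    IsSimplicialClique G (Subtype.val '' D) := by
  refine ⟨(isClique_image_iff (Embedding.induce _)).2 hD, v, ⟨v, hvD, rfl⟩, fun u hu => ?_⟩
  have hux : u ≠ x := by rintro rfl; exact hvx hu.symm
  exact ⟨⟨u, hux⟩, hv hu, rfl⟩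

lemma subsingleton_simplicialCliques_induce_compl_singleton (hx : G.IsClique (G.neighborSet x)) :
    {D ∈ simplicialCliques (G.induce {x}ᶜ) |
      Subtype.val '' D ∉ simplicialCliques G}.Subsingleton := by
  rintro D ⟨⟨hD, v, hvD, hv⟩, hDG⟩ E ⟨⟨hE, w, hwE, hw⟩, hEG⟩
  have hxv : G.Adj x v := by_contra (hDG <| isSimplicialClique_image_of_not_adj hD hvD hv ·)
  have hxw : G.Adj x w := by_contra (hEG <| isSimplicialClique_image_of_not_adj hE hwE hw ·)
  exact eq_of_isClique_of_neighborSet_subset hD hE hvD hwE hv hw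
    fun hvw => hx hxv hxw (Subtype.coe_ne_coe.2 hvw)

lemma ncard_simplicialCliques_induce_add_one_le [Finite V] (hx : G.IsClique (G.neighborSet x)) :
    {D ∈ simplicialCliques (G.induce {x}ᶜ) |
      Subtype.val '' D ∈ simplicialCliques G}.ncard + 1 ≤ (simplicialCliques G).ncard := by
  set good := {D ∈ simplicialCliques (G.induce {x}ᶜ) | Subtype.val '' D ∈ simplicialCliques G}
  have hnotMem : insert x (G.neighborSet x) ∉ (Subtype.val '' ·) '' good := by
    rintro ⟨D, -, hD⟩
    obtain ⟨u, -, hu⟩ := hD.ge (Set.mem_insert x _)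
    exact u.2 hu
  calc good.ncard + 1
      = (insert (insert x (G.neighborSet x)) ((Subtype.val '' ·) '' good)).ncard := by
        rw [Set.ncard_insert_of_notMem hnotMem,
          Set.ncard_image_of_injective _ Subtype.val_injective.image_injective]
    _ ≤ (simplicialCliques G).ncard := by
        refine Set.ncard_le_ncard (Set.insert_subset (isSimplicialClique_insert_neighborSet hx) ?_)
        rintro _ ⟨D, hD, rfl⟩
        exact hD.2

lemma IsChordal.ncard_induce_compl_singleton_add_one_le [Finite V] (hG : IsChordal G)
    (hx : G.IsClique (G.neighborSet x)) :
    (maximalIndepSets (G.induce {x}ᶜ)).ncard + (simplicialCliques (G.induce {x}ᶜ)).ncard + 1 ≤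
      (maximalIndepSets G).ncard + (simplicialCliques G).ncard := by
  set good := {D ∈ simplicialCliques (G.induce {x}ᶜ) | Subtype.val '' D ∈ simplicialCliques G}
  set bad := {D ∈ simplicialCliques (G.induce {x}ᶜ) | Subtype.val '' D ∉ simplicialCliques G}
  have hsplit : (simplicialCliques (G.induce {x}ᶜ)).ncard ≤ good.ncard + bad.ncard := by
    refine le_of_eq_of_le (congrArg _ ?_) (Set.ncard_union_le good bad)
    exact (Set.inter_union_sdiff _ {D | Subtype.val '' D ∈ simplicialCliques G}).symm
  have hgood : good.ncard + 1 ≤ _ := ncard_simplicialCliques_induce_add_one_le hx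
  have hbad : bad.Subsingleton := subsingleton_simplicialCliques_induce_compl_singleton hx
  rcases hbad.eq_empty_or_singleton with hempty | ⟨D, hD⟩
  · have := ncard_maximalIndepSets_le (Embedding.induce (G := G) {x}ᶜ)
    rw [hempty, Set.ncard_empty] at hsplit
    lia
  · obtain ⟨hDs, hDG⟩ : D ∈ bad := hD ▸ Set.mem_singleton D
    have := hG.ncard_maximalIndepSets_lt_of_image_notMem (Embedding.induce {x}ᶜ) hDs hDG
    rw [hD, Set.ncard_singleton] at hsplit
    lia

end Deletion

theorem IsChordal.card_add_one_le [Finite V] (hG : IsChordal G) :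
    Nat.card V + 1 ≤ (maximalIndepSets G).ncard + (simplicialCliques G).ncard := by
  induction hn : Nat.card V generalizing V with
  | zero =>
    obtain ⟨J, hJ, -⟩ := exists_mem_maximalIndepSets_superset (G := G) (Set.pairwise_empty _)
    have := (Set.ncard_pos (Set.toFinite _)).2 ⟨J, hJ⟩
    lia
  | succ n ih =>
    have : Nonempty V := (Nat.card_pos_iff.1 (hn ▸ n.succ_pos)).1
    obtain ⟨x, hx⟩ := hG.exists_isClique_neighborSet
    have hcard : Nat.card ↥({x}ᶜ : Set V) = n := by
      rw [Nat.card_coe_set_eq, Set.ncard_compl, Set.ncard_singleton, hn, Nat.add_sub_cancel]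
    have := ih (hG.comap (Embedding.induce {x}ᶜ)) hcard
    have := hG.ncard_induce_compl_singleton_add_one_le hx
    lia

end Chordal

section DistPower

variable {V W : Type*} {G : SimpleGraph V} {H : SimpleGraph W}

/-- The `k`-th power of `G`: distinct vertices are adjacent when their distance is at most `k`, so
that its maximal independent sets are the `k`-MDISs of `G`. Like `DkIndep`, it uses the junk value
`0` for the distance between vertices in different components. -/
def distPower (G : SimpleGraph V) (k : ℕ) : SimpleGraph V where
  Adj u v := u ≠ v ∧ G.dist u v ≤ k
  symm := ⟨fun _ _ h => ⟨h.1.symm, dist_comm.trans_le h.2⟩⟩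
  loopless := ⟨fun _ h => h.1 rfl⟩

lemma isIndepSet_distPower_iff {k : ℕ} {J : Set V} :
    (distPower G k).IsIndepSet J ↔ DkIndep G k J := by
  refine forall₄_congr fun u _ v _ => forall_congr' fun huv => ?_
  simp only [distPower, huv, ne_eq, not_false_eq_true, true_and, not_le, Nat.succ_le_iff]

lemma maxDkIndep_iff {k : ℕ} {J : Set V} :
    MaxDkIndep G k J ↔ J ∈ maximalIndepSets (distPower G k) := by
  simp only [MaxDkIndep, maximalIndepSets, Set.mem_ofPred_eq, maximal_iff,
    isIndepSet_distPower_iff, eq_comm]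

lemma mdi_eq_ncard_maximalIndepSets (G : SimpleGraph V) (k : ℕ) :
    mdi G k = (maximalIndepSets (distPower G k)).ncard :=
  congrArg Set.ncard (Set.ext fun _ => maxDkIndep_iff)

lemma dist_map_le (f : G →g H) {u v : V} (h : G.Reachable u v) :
    H.dist (f u) (f v) ≤ G.dist u v := by
  obtain ⟨w, hw⟩ := h.exists_walk_length_eq_dist
  rw [← hw, ← w.length_map f]
  exact dist_le _

lemma dist_map_iso (e : G ≃g H) (u v : V) : H.dist (e u) (e v) = G.dist u v := by
  by_cases h : G.Reachable u v
  · refine (dist_map_le e.toHom h).antisymm ?_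
    simpa using dist_map_le e.symm.toHom (h.map e.toHom)
  · rw [dist_eq_zero_of_not_reachable h, dist_eq_zero_of_not_reachable (mt Iso.reachable_iff.1 h)]

lemma mdi_congr [Finite V] (e : G ≃g H) (k : ℕ) : mdi G k = mdi H k := by
  have hadj (u v : V) : (distPower H k).Adj (e u) (e v) ↔ (distPower G k).Adj u v := by
    simp only [distPower, dist_map_iso, e.injective.ne_iff]
  rw [mdi_eq_ncard_maximalIndepSets, mdi_eq_ncard_maximalIndepSets]
  exact ncard_maximalIndepSets_congr ⟨e.toEquiv, hadj _ _⟩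

end DistPower

section Tree

variable {V : Type*} {T : SimpleGraph V}

lemma exists_adj_of_dist_eq_add_one {G : SimpleGraph V} {u v : V} {n : ℕ}
    (h : G.dist u v = n + 1) : ∃ w, G.Adj u w ∧ G.dist w v = n := by
  obtain ⟨p, hp⟩ := exists_walk_of_dist_ne_zero (h.trans_ne n.succ_ne_zero)
  cases p with
  | nil => simp at h
  | @cons _ w _ hadj q =>
    have hq := length_eq_dist_of_subwalk hp (Walk.isSubwalk_cons q hadj)
    exact ⟨w, hadj, by simp only [Walk.length_cons] at hp; lia⟩

lemma length_eq_dist_of_isPath (hT : T.IsTree) {u v : V} {p : T.Walk u v} (hp : p.IsPath) :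
    p.length = T.dist u v := by
  obtain ⟨q, hq, hlen⟩ := hT.connected.exists_path_of_dist u v
  rw [← hlen, (hT.existsUnique_path u v).unique hp hq]

lemma dist_eq_dist_add_dist_of_adj (hT : T.IsTree) {a a' b c : V} (hadj : T.Adj a a')
    (hb : T.dist b a = T.dist b a' + 1) (hc : T.dist a' c = T.dist a c + 1) :
    T.dist b c = T.dist b a + T.dist a c := by
  obtain ⟨p, hp⟩ := hT.connected.exists_walk_length_eq_dist b a'
  obtain ⟨q, hq⟩ := hT.connected.exists_walk_length_eq_dist a c
  have hpa : (p.concat hadj.symm).IsPath := Walk.isPath_of_length_eq_dist _ (by simp [hp, hb])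
  have haq : (Walk.cons hadj.symm q).IsPath := Walk.isPath_of_length_eq_dist _ (by simp [hq, hc])
  -- In a tree every walk without backtracking is a path, so paths can be glued along an edge.
  have hpaq : ((p.concat hadj.symm).append q).IsPath := by
    rw [hT.isAcyclic.isPath_iff_isChain] at hpa haq ⊢
    rw [Walk.edges_concat, List.concat_eq_append] at hpa
    rw [Walk.edges_append, Walk.edges_concat, List.concat_eq_append]
    exact hpa.append_overlap haq (List.cons_ne_nil _ _)
  rw [← length_eq_dist_of_isPath hT hpaq, Walk.length_append, Walk.length_concat, hp, hq, hb]

lemma dist_four_point (hT : T.IsTree) (a b c d : V) :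
    T.dist a b + T.dist c d ≤ max (T.dist a c + T.dist b d) (T.dist a d + T.dist b c) := by
  induction hn : T.dist a b generalizing a with
  | zero =>
    obtain rfl := hT.connected.dist_eq_zero_iff.1 hn
    have := hT.connected.dist_triangle (u := c) (v := a) (w := d)
    rw [T.dist_comm (u := c) (v := a)] at this
    lia
  | succ n ih =>
    obtain ⟨a', hadj, ha'⟩ := exists_adj_of_dist_eq_add_one hn
    have hba : T.dist b a = T.dist b a' + 1 := by rw [dist_comm, hn, dist_comm, ha']
    -- If `a` lies between `b` and `c`, the bound is an instance of the triangle inequality.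
    have hbetween {c d : V} (hc : T.dist a' c = T.dist a c + 1) :
        T.dist a b + T.dist c d ≤ T.dist a d + T.dist b c := by
      have := hT.connected.dist_triangle (u := c) (v := a) (w := d)
      have := dist_eq_dist_add_dist_of_adj hT hadj hba hc
      have := T.dist_comm (u := a) (v := b)
      have := T.dist_comm (u := a) (v := c)
      lia
    have hstep (v : V) : T.dist a v = T.dist a' v + 1 ∨ T.dist a' v = T.dist a v + 1 := by
      simpa only [T.dist_comm (u := v)] using hT.dist_eq_dist_add_one_of_adj v hadj
    rcases hstep c with hc | hc
    · rcases hstep d with hd | hd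
      · have := ih a' ha'
        lia
      · have := hbetween (d := c) hd
        have := T.dist_comm (u := c) (v := d)
        lia
    · have := hbetween (d := d) hc
      lia

lemma isChordal_distPower [Finite V] (hT : T.IsTree) (k : ℕ) : IsChordal (distPower T k) := by
  rintro s ⟨r, hr⟩
  obtain ⟨x, hx, hmax⟩ := Set.exists_max_image s (T.dist r) s.toFinite ⟨r, hr⟩
  refine ⟨x, hx, fun y ⟨hxy, hy⟩ z ⟨hxz, hz⟩ hyz => ⟨hyz, ?_⟩⟩
  have := dist_four_point hT r x y z
  have := hmax y hy
  have := hmax z hz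
  have := hxy.2
  have := hxz.2
  lia

end Tree

section Spider

variable {p m : ℕ}

/-- The neighbour of a leg vertex of the spider on the side of the centre. -/
def spiderParent : Fin p × Fin m → Option (Fin p × Fin m)
  | (_, ⟨0, _⟩) => none
  | (i, ⟨j + 1, hj⟩) => some (i, ⟨j, Nat.lt_of_succ_lt hj⟩)

/-- The distance of a vertex of the spider to the centre. -/
def spiderDepth : Option (Fin p × Fin m) → ℕ
  | none => 0
  | some (_, j) => j + 1

lemma spiderDepth_eq_parent_add_one (y : Fin p × Fin m) :
    spiderDepth (some y) = spiderDepth (spiderParent y) + 1 := by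
  obtain ⟨i, ⟨_ | j, hj⟩⟩ := y <;> rfl

lemma spider_adj_iff {u v : Option (Fin p × Fin m)} :
    (spider p m).Adj u v ↔
      (∃ y, u = spiderParent y ∧ v = some y) ∨ ∃ y, v = spiderParent y ∧ u = some y := by
  have hne (y : Fin p × Fin m) : spiderParent y ≠ some y := fun h =>
    Nat.succ_ne_self _ ((spiderDepth_eq_parent_add_one y).symm.trans (congrArg _ h.symm))
  have hrel (u v : Option (Fin p × Fin m)) : (match u, v with
      | none, some (_, j) => (j : ℕ) = 0
      | some (i, j), some (i', j') => i = i' ∧ (j : ℕ) + 1 = (j' : ℕ)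
      | _, _ => False) ↔ ∃ y, u = spiderParent y ∧ v = some y := by
    rcases u with _ | ⟨i, j⟩ <;> rcases v with _ | ⟨i', ⟨_ | j', hj'⟩⟩ <;>
      simp [spiderParent, Fin.ext_iff]
  rw [spider, fromRel_adj, hrel, hrel, and_iff_right_iff_imp]
  rintro (⟨y, rfl, rfl⟩ | ⟨y, rfl, rfl⟩)
  · exact hne y
  · exact (hne y).symm

lemma spider_adj_parent (y : Fin p × Fin m) : (spider p m).Adj (spiderParent y) (some y) :=
  spider_adj_iff.2 (Or.inl ⟨y, rfl, rfl⟩)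

lemma exists_walk_length_eq_spiderDepth (v : Option (Fin p × Fin m)) :
    ∃ w : (spider p m).Walk none v, w.length = spiderDepth v := by
  induction hn : spiderDepth v generalizing v with
  | zero =>
    cases v with
    | none => exact ⟨Walk.nil, rfl⟩
    | some y => exact absurd hn (Nat.succ_ne_zero _)
  | succ n ih =>
    cases v with
    | none => exact absurd hn.symm (Nat.succ_ne_zero _)
    | some y =>
      rw [spiderDepth_eq_parent_add_one] at hn
      obtain ⟨w, hw⟩ := ih (spiderParent y) (Nat.succ_injective hn)
      exact ⟨w.concat (spider_adj_parent y), by rw [Walk.length_concat, hw]⟩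

lemma spider_connected (p m : ℕ) : (spider p m).Connected :=
  connected_iff_exists_forall_reachable _ |>.2
    ⟨none, fun v => (exists_walk_length_eq_spiderDepth v).choose.reachable⟩

lemma spider_isTree (p m : ℕ) : (spider p m).IsTree := by
  refine isTree_iff_connected_and_card.2 ⟨spider_connected p m, ?_⟩
  refine le_antisymm ?_ (spider_connected p m).card_vert_le_card_edgeSet_add_one
  rw [Finite.card_option, Nat.add_le_add_iff_right]
  refine Nat.card_le_card_of_surjective
    (fun y => ⟨s(spiderParent y, some y), spider_adj_parent y⟩) ?_
  rintro ⟨⟨u, v⟩, he⟩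
  rcases spider_adj_iff.1 he with ⟨y, rfl, rfl⟩ | ⟨y, rfl, rfl⟩
  · exact ⟨y, rfl⟩
  · exact ⟨y, Subtype.ext Sym2.eq_swap⟩

lemma spider_dist_le (u v : Option (Fin p × Fin m)) :
    (spider p m).dist u v ≤ spiderDepth u + spiderDepth v := by
  obtain ⟨w, hw⟩ := exists_walk_length_eq_spiderDepth u
  obtain ⟨w', hw'⟩ := exists_walk_length_eq_spiderDepth v
  simpa [hw, hw'] using dist_le (w.reverse.append w')

lemma sub_le_dist_of_adj {V : Type*} {G : SimpleGraph V} (hG : G.Connected) {f : V → ℤ}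
    (hf : ∀ u v, G.Adj u v → f u - f v ≤ 1) (u v : V) : f u - f v ≤ G.dist u v := by
  obtain ⟨w, hw⟩ := hG.exists_walk_length_eq_dist u v
  rw [← hw]
  clear hw
  induction w with
  | nil => simp
  | cons hadj w ih =>
    have := hf _ _ hadj
    rw [Walk.length_cons]
    lia

lemma spiderDepth_add_le_dist {i i' : Fin p} (hi : i ≠ i') (j j' : Fin m) :
    spiderDepth (some (i, j)) + spiderDepth (some (i', j')) ≤
      (spider p m).dist (some (i, j)) (some (i', j')) := by
  -- The signed distance to the centre, counted positively on leg `i`, is 1-Lipschitz.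
  let f : Option (Fin p × Fin m) → ℤ
    | none => 0
    | some (l, j) => if l = i then j + 1 else -(j + 1)
  have hparent (y : Fin p × Fin m) : |f (spiderParent y) - f (some y)| ≤ 1 := by
    obtain ⟨l, ⟨_ | j, hj⟩⟩ := y <;> by_cases hl : l = i <;>
      simp [f, spiderParent, hl]
  have hf (u v) (huv : (spider p m).Adj u v) : f u - f v ≤ 1 := by
    rcases spider_adj_iff.1 huv with ⟨y, rfl, rfl⟩ | ⟨y, rfl, rfl⟩
    · exact (abs_le.1 (hparent y)).2
    · have := (abs_le.1 (hparent y)).1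
      lia
  have := sub_le_dist_of_adj (spider_connected p m) hf (some (i, j)) (some (i', j'))
  simp only [f, if_true, hi.symm, if_false] at this
  simp only [spiderDepth]
  omega

lemma spiderDepth_le (v : Option (Fin p × Fin m)) : spiderDepth v ≤ m := by
  match v with
  | none => exact m.zero_le
  | some (_, j) => exact j.isLt

lemma mdi_spider (p t : ℕ) [NeZero p] : mdi (spider p (t + 1)) (2 * t + 1) = p * t + 2 := by
  let leaf (i : Fin p) : Option (Fin p × Fin (t + 1)) := some (i, Fin.last t)
  have hleaf : Function.Injective leaf := fun i i' h => by simpa [leaf] using h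
  have hle (v) (hv : v ∉ Set.range leaf) : spiderDepth v ≤ t := by
    match v with
    | none => exact t.zero_le
    | some (i, j) =>
      have hj : j ≠ Fin.last t := fun h => hv ⟨i, by rw [h]⟩
      exact Fin.lt_last_iff_ne_last.2 hj
  have hadj (u v) : (distPower (spider p (t + 1)) (2 * t + 1)).Adj u v ↔
      u ≠ v ∧ ¬(u ∈ Set.range leaf ∧ v ∈ Set.range leaf) := by
    refine and_congr_right fun huv => ⟨?_, fun h => ?_⟩
    · rintro hdist ⟨⟨i, rfl⟩, i', rfl⟩
      have := spiderDepth_add_le_dist (fun h => huv (congrArg leaf h)) (Fin.last t) (Fin.last t)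
      simp only [spiderDepth, Fin.val_last] at this
      lia
    · have := spider_dist_le u v
      rcases not_and_or.1 h with hu | hv
      · have := hle u hu
        have := spiderDepth_le v
        lia
      · have := hle v hv
        have := spiderDepth_le u
        lia
  rw [mdi_eq_ncard_maximalIndepSets,
    ncard_maximalIndepSets_of_adj_iff (Set.range_nonempty leaf) hadj, Set.ncard_compl,
    ← Set.image_univ, Set.ncard_image_of_injective _ hleaf, Set.ncard_univ, Finite.card_option]
  have hcard : Nat.card (Fin p × Fin (t + 1)) = p * (t + 1) := by simp
  rw [hcard, Nat.card_fin]
  lia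

end Spider

section SpiderRecognition

variable {V W : Type*} {G : SimpleGraph V} {H : SimpleGraph W}

lemma nonempty_iso_of_bijective_hom (hG : G.Connected) (hH : H.IsTree) (f : G →g H)
    (hf : Function.Bijective f) : Nonempty (G ≃g H) := by
  let e : H.comap f ≃g H := Iso.comap (Equiv.ofBijective f hf) H
  have hle : G ≤ H.comap f := fun _ _ => f.map_adj
  have hmin := isTree_iff_minimal_connected.1 (e.isTree_iff.2 hH)
  rw [hle.antisymm (hmin.le_of_le hG hle)]
  exact ⟨e⟩

lemma exists_geodesic_of_le_dist (hG : G.Connected) {u v : V} {n : ℕ} (hn : n ≤ G.dist u v) :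
    ∃ q : ℕ → V, (∀ s ≤ n, G.dist u (q s) = s) ∧ ∀ s < n, G.Adj (q s) (q (s + 1)) := by
  obtain ⟨w, hw⟩ := hG.exists_walk_length_eq_dist u v
  refine ⟨w.getVert, fun s hs => ?_, fun s hs => w.adj_getVert_succ (by lia)⟩
  rw [← length_eq_dist_of_subwalk hw (w.isSubwalk_take s), Walk.take_length]
  lia

variable {p m : ℕ} {x : Fin p → V}

lemma eq_of_dist_add_dist_lt (hG : G.Connected) (hx : ∀ i j, i ≠ j → 2 * m ≤ G.dist (x i) (x j))
    {i j : Fin p} {y : V} (h : G.dist (x i) y + G.dist (x j) y < 2 * m) : i = j := by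
  by_contra hij
  have := hx i j hij
  have : G.dist (x i) (x j) ≤ G.dist (x i) y + G.dist y (x j) := hG.dist_triangle
  rw [dist_comm (u := y)] at this
  lia

/-- The paths `q i 0, …, q i m` are injective and pairwise disjoint, except that their end points
`q i m` may coincide. (For `s, t ≤ m`, the condition `s + t < 2 * m` excludes only `s = t = m`.) -/
def MeetOnlyAtEnd (q : Fin p → ℕ → V) (m : ℕ) : Prop :=
  ∀ ⦃i j s t⦄, s ≤ m → t ≤ m → s + t < 2 * m → q i s = q j t → i = j ∧ s = t

/-- The map sending leg `i` of the spider to the path `q i`, read backwards from `q i m`; the centre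
goes to the end point of the zeroth path. -/
def spiderMap [NeZero p] (q : Fin p → ℕ → V) : Option (Fin p × Fin m) → V
  | none => q 0 m
  | some (i, j) => q i (m - (j + 1))

lemma meetOnlyAtEnd_of_dist_eq (hG : G.Connected)
    (hx : ∀ i j, i ≠ j → 2 * m ≤ G.dist (x i) (x j)) {q : Fin p → ℕ → V}
    (hdist : ∀ i, ∀ s ≤ m, G.dist (x i) (q i s) = s) : MeetOnlyAtEnd q m := by
  intro i j s t hs ht hst h
  have hi := hdist i s hs
  have hj := hdist j t ht
  rw [← h] at hj
  obtain rfl : i = j := eq_of_dist_add_dist_lt hG hx (by rwa [hi, hj])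
  exact ⟨rfl, hi.symm.trans hj⟩

namespace MeetOnlyAtEnd

variable [NeZero p] {q : Fin p → ℕ → V}

lemma injective_spiderMap (hq : MeetOnlyAtEnd q m) : Function.Injective (spiderMap (m := m) q) := by
  rintro (_ | ⟨i, j⟩) (_ | ⟨i', j'⟩) h
  · rfl
  · have := (hq le_rfl (Nat.sub_le _ _) (by lia) h).2
    lia
  · have := (hq (Nat.sub_le _ _) le_rfl (by lia) h).2
    lia
  · obtain ⟨rfl, hj⟩ := hq (Nat.sub_le _ _) (Nat.sub_le _ _) (by lia) h
    obtain rfl : j = j' := by lia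
    rfl

lemma bijective_spiderMap [Finite V] (hq : MeetOnlyAtEnd q m) (hV : Nat.card V = p * m + 1) :
    Function.Bijective (spiderMap (m := m) q) :=
  hq.injective_spiderMap.bijective_of_nat_card_le (by simp [hV])

-- There is no room for a second end point: the paths and one end point already exhaust `V`.
lemma end_eq_end_zero [Finite V] (hq : MeetOnlyAtEnd q m) (hV : Nat.card V = p * m + 1)
    (i : Fin p) : q i m = q 0 m := by
  obtain ⟨_ | ⟨i', j⟩, hv⟩ := (hq.bijective_spiderMap hV).surjective (q i m)
  · exact hv.symm
  · have := (hq (Nat.sub_le _ _) le_rfl (by lia) hv).2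
    lia

lemma adj_spiderMap [Finite V] (hq : MeetOnlyAtEnd q m) (hV : Nat.card V = p * m + 1)
    (hadj : ∀ i, ∀ s < m, G.Adj (q i s) (q i (s + 1))) {u v : Option (Fin p × Fin m)}
    (huv : (spider p m).Adj u v) : G.Adj (spiderMap q u) (spiderMap q v) := by
  have hparent (y : Fin p × Fin m) :
      G.Adj (spiderMap q (spiderParent y)) (spiderMap q (some y)) := by
    have hy : spiderMap q (spiderParent y) = q y.1 (m - (y.2 + 1) + 1) := by
      obtain ⟨i, ⟨_ | j, hj⟩⟩ := y
      · rw [Nat.sub_add_cancel hj, hq.end_eq_end_zero hV]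
        rfl
      · exact congrArg (q i) (show m - (j + 1) = m - (j + 1 + 1) + 1 by lia)
    rw [hy]
    exact (hadj y.1 _ (by lia)).symm
  rcases spider_adj_iff.1 huv with ⟨y, rfl, rfl⟩ | ⟨y, rfl, rfl⟩
  · exact hparent y
  · exact (hparent y).symm

end MeetOnlyAtEnd

lemma nonempty_iso_spider_of_le_dist [Finite V] (hG : G.IsTree) (hp : 2 ≤ p)
    (hV : Nat.card V = p * m + 1) (hx : ∀ i j, i ≠ j → 2 * m ≤ G.dist (x i) (x j)) :
    Nonempty (G ≃g spider p m) := by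
  have : Nontrivial (Fin p) := Fin.nontrivial_iff_two_le.2 hp
  have : NeZero p := ⟨by lia⟩
  have hlegs (i : Fin p) : ∃ q : ℕ → V, (∀ s ≤ m, G.dist (x i) (q s) = s) ∧
      ∀ s < m, G.Adj (q s) (q (s + 1)) := by
    obtain ⟨j, hij⟩ := exists_ne i
    have := hx i j hij.symm
    exact exists_geodesic_of_le_dist hG.connected (v := x j) (by lia)
  choose q hdist hadj using hlegs
  have hq := meetOnlyAtEnd_of_dist_eq hG.connected hx hdist
  obtain ⟨e⟩ := nonempty_iso_of_bijective_hom (spider_connected p m) hG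
    ⟨spiderMap q, hq.adj_spiderMap hV hadj⟩ (hq.bijective_spiderMap hV)
  exact ⟨e.symm⟩

end SpiderRecognition

section Extremal

variable {V : Type*} [Finite V] {T : SimpleGraph V} {p t : ℕ}

lemma nonempty_iso_spider_of_mdi_le (hT : T.IsTree) (hp : 2 ≤ p)
    (hV : Nat.card V = p * (t + 1) + 1) (hmdi : mdi T (2 * t + 1) ≤ p * t + 2) :
    Nonempty (T ≃g spider p (t + 1)) := by
  have hcard := (isChordal_distPower hT (2 * t + 1)).card_add_one_le
  rw [mdi_eq_ncard_maximalIndepSets] at hmdi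
  obtain ⟨x, hx⟩ := exists_far_of_le_ncard_simplicialCliques (p := p)
    (G := distPower T (2 * t + 1)) (by lia)
  refine nonempty_iso_spider_of_le_dist hT hp hV (x := x) fun i j hij => ?_
  obtain ⟨hne, hfar⟩ := hx i j hij
  exact Nat.lt_of_not_ge fun hle => hfar ⟨hne, hle⟩

lemma mdi_eq_iff_nonempty_iso_spider (hT : T.IsTree) (hp : 2 ≤ p)
    (hV : Nat.card V = p * (t + 1) + 1) :
    mdi T (2 * t + 1) = p * t + 2 ↔ Nonempty (T ≃g spider p (t + 1)) := by
  refine ⟨fun h => nonempty_iso_spider_of_mdi_le hT hp hV h.le, fun ⟨e⟩ => ?_⟩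
  have : NeZero p := ⟨by lia⟩
  rw [mdi_congr e, mdi_spider]

lemma mul_add_two_le_mdi (hT : T.IsTree) (hp : 2 ≤ p) (hV : Nat.card V = p * (t + 1) + 1) :
    p * t + 2 ≤ mdi T (2 * t + 1) := by
  by_contra! hlt
  have hiso := nonempty_iso_spider_of_mdi_le hT hp hV hlt.le
  exact hlt.ne ((mdi_eq_iff_nonempty_iso_spider hT hp hV).2 hiso)

lemma fk_two_mul_add_one (hp : 2 ≤ p) : fk (2 * t + 1) (p * (t + 1) + 1) = p * t + 2 := by
  have hlt : 2 * t + 2 < p * (t + 1) + 1 := by nlinarith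
  have hhalf : (2 * t + 1) / 2 = t := by lia
  have hmod : (2 * t + 1) % 2 = 1 := by lia
  rw [fk, if_neg hlt.not_ge, hhalf, hmod, Nat.add_sub_cancel, Nat.mul_div_cancel _ t.succ_pos]
  lia

end Extremal

theorem stmt_18_general {V : Type*} [Finite V] (k : ℕ) (hodd : Odd k) (n : ℕ) (hn : k + 2 ≤ n)
    (hdvd : (k / 2 + 1) ∣ (n - 1)) (p : ℕ) (hp : p = (n - 1) / (k / 2 + 1))
    (hV : Nat.card V = n) :
    (∀ T : SimpleGraph V, T.IsTree →
      (mdi T k = fk k n ↔ Nonempty (T ≃g spider p (k / 2 + 1)))) ∧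
    (∃ T : SimpleGraph V, T.IsTree ∧
      (∀ T' : SimpleGraph V, T'.IsTree → mdi T k ≤ mdi T' k) ∧
      Nonempty (T ≃g spider p (k / 2 + 1)) ∧
      (∀ T'' : SimpleGraph V, T''.IsTree →
        (∀ T' : SimpleGraph V, T'.IsTree → mdi T'' k ≤ mdi T' k) →
        Nonempty (T'' ≃g T))) := by
  obtain ⟨t, rfl⟩ := hodd
  have hhalf : (2 * t + 1) / 2 = t := by lia
  rw [hhalf] at hdvd hp ⊢
  have hmul : p * (t + 1) = n - 1 := hp ▸ Nat.div_mul_cancel hdvd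
  obtain rfl : n = p * (t + 1) + 1 := by lia
  have hp2 : 2 ≤ p := by nlinarith
  rw [fk_two_mul_add_one hp2]
  have hmdi {T : SimpleGraph V} (hT : T.IsTree) := mdi_eq_iff_nonempty_iso_spider hT hp2 hV
  refine ⟨fun T hT => hmdi hT, ?_⟩
  obtain ⟨e⟩ : Nonempty (V ≃ Option (Fin p × Fin (t + 1))) :=
    Finite.card_eq.1 (by simp [hV])
  let S := (spider p (t + 1)).comap e
  let eS : S ≃g spider p (t + 1) := Iso.comap e _
  have hS : S.IsTree := eS.isTree_iff.2 (spider_isTree _ _)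
  have hmdiS : mdi S (2 * t + 1) = p * t + 2 := (hmdi hS).2 ⟨eS⟩
  have hmin (T : SimpleGraph V) (hT : T.IsTree) : mdi S (2 * t + 1) ≤ mdi T (2 * t + 1) :=
    hmdiS.trans_le (mul_add_two_le_mdi hT hp2 hV)
  refine ⟨S, hS, hmin, ⟨eS⟩, fun T hT hTmin => ?_⟩
  obtain ⟨eT⟩ := nonempty_iso_spider_of_mdi_le hT hp2 hV ((hTmin S hS).trans_eq hmdiS)
  exact ⟨eT.trans eS.symm⟩

/-- Let `k ≥ 3` be odd, `n ≥ k + 2` with `⌊k/2⌋ + 1 ∣ n − 1`, and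
`p = (n−1)/(⌊k/2⌋+1)`. Then an `n`-vertex tree `T` satisfies `mdi_k(T) = f_k(n)` iff
`T ≅ S_{p,⌊k/2⌋+1}`; in particular, up to isomorphism there is a unique `n`-vertex
tree with the minimum possible number of `k`-MDISs among all `n`-vertex trees. -/
theorem stmt_18 (k : ℕ) (hk : 3 ≤ k) (hodd : Odd k) (n : ℕ) (hn : k + 2 ≤ n)
    (hdvd : (k / 2 + 1) ∣ (n - 1)) (p : ℕ) (hp : p = (n - 1) / (k / 2 + 1)) :
    (∀ T : SimpleGraph (Fin n), T.IsTree →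
      (mdi T k = fk k n ↔ Nonempty (T ≃g spider p (k / 2 + 1)))) ∧
    (∃ T : SimpleGraph (Fin n), T.IsTree ∧
      (∀ T' : SimpleGraph (Fin n), T'.IsTree → mdi T k ≤ mdi T' k) ∧
      Nonempty (T ≃g spider p (k / 2 + 1)) ∧
      (∀ T'' : SimpleGraph (Fin n), T''.IsTree →
        (∀ T' : SimpleGraph (Fin n), T'.IsTree → mdi T'' k ≤ mdi T' k) →
        Nonempty (T'' ≃g T))) :=
  stmt_18_general k hodd n hn hdvd p hp (Nat.card_fin n)
end
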